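/- arXiv:1902.06324 — 2 statements merged into one kernel-verified Lean document; each statement's English description precedes it below -/
import Mathlib

section
/- Let k be an algebraically closed field. There exist irreducible homogeneous polynomials f, g ∈ k[x₀,x₁,x₂] of total degree 8 such that the degree-zero localization rings A_f and A_g are isomorphic as k-algebras (the curves V(f) and V(g) have isomorphic complements in ℙ²), but f and g are not projectively equivalent. -/
open MvPolynomial

attribute [local instance] MvPolynomial.gradedAlgebra

/-- The degree-zero part `A_f` of the localization of `k[x₀,x₁,x₂]` away from `f`,
i.e. the coordinate ring of the affine variety `ℙ² ∖ V(f)`. -/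
noncomputable abbrev AwayRing (k : Type) [Field k] (f : MvPolynomial (Fin 3) k) : Type :=
  HomogeneousLocalization.Away (homogeneousSubmodule (Fin 3) k) f

noncomputable instance (k : Type) [Field k] (f : MvPolynomial (Fin 3) k) :
    Algebra k (AwayRing k f) :=
  ((algebraMap (homogeneousSubmodule (Fin 3) k 0) (AwayRing k f)).comp
    (algebraMap k (homogeneousSubmodule (Fin 3) k 0))).toAlgebra

/-- Two (homogeneous) polynomials are projectively equivalent if a linear change of
coordinates by an invertible matrix sends one to a nonzero scalar multiple of the other. -/
def ProjEquiv {k : Type} [Field k] (f g : MvPolynomial (Fin 3) k) : Prop :=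
  ∃ N : Matrix (Fin 3) (Fin 3) k, IsUnit N.det ∧ ∃ c : kˣ,
    aeval (fun i => ∑ j, C (N i j) * X j) f = (c : k) • g

/-! The Geiser-type involution attached to a nodal cubic -/

namespace YC

section Identities

variable {R : Type*} [CommRing R]

def Qf (v : Fin 3 → R) : R := v 1 * v 2 - v 0 ^ 2
def Nf (v : Fin 3 → R) : R := v 0 * Qf v - v 1 ^ 3
def Bf (v : Fin 3 → R) : R := v 2 * Qf v - v 0 * v 1 ^ 2
def Wf (v : Fin 3 → R) : R := Qf v * Bf v - v 1 ^ 2 * Nf v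
def Zf (v : Fin 3 → R) : R := Bf v * Wf v - v 1 * Qf v ^ 2 * Nf v

/-- The involution of degree 8. -/
def S (v : Fin 3 → R) : Fin 3 → R := ![Nf v * Wf v, Nf v ^ 2 * Qf v, Zf v]

/-- The tangent line to the cubic. -/
def L (a b : R) (v : Fin 3 → R) : R :=
  (a ^ 4 - 2 * a * b ^ 3) * v 0 + (b ^ 4 - 2 * a ^ 3 * b) * v 1 + a ^ 2 * b ^ 2 * v 2

/-- The quadratic map. -/
def T (a b : R) (v : Fin 3 → R) : Fin 3 → R :=
  ![-a * b ^ 2 * (b ^ 3 * v 1 ^ 2 - 3 * a * b ^ 2 * v 0 * v 1 + 3 * a ^ 2 * b * v 0 ^ 2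
      - a ^ 3 * (v 2 * v 0 - v 1 ^ 2)),
    a ^ 2 * b * (b ^ 3 * Qf v - 3 * a * b ^ 2 * v 1 ^ 2 + 3 * a ^ 2 * b * v 0 * v 1
      - a ^ 3 * v 0 ^ 2),
    -a ^ 3 * b ^ 3 * (v 2 ^ 2 - 2 * v 0 * v 1) + 3 * a ^ 2 * b ^ 4 * (v 2 * v 0 - v 1 ^ 2)
      - 3 * a * b ^ 5 * v 0 ^ 2 + (a ^ 6 + b ^ 6) * v 0 * v 1 - 3 * a ^ 5 * b * v 1 ^ 2
      + 3 * a ^ 4 * b ^ 2 * Qf v]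

/-- The octic. -/
def F (a b : R) (v : Fin 3 → R) : R := L a b (S v)

@[simp] lemma S_zero (v : Fin 3 → R) : S v 0 = Nf v * Wf v := rfl
@[simp] lemma S_one (v : Fin 3 → R) : S v 1 = Nf v ^ 2 * Qf v := rfl
@[simp] lemma S_two (v : Fin 3 → R) : S v 2 = Zf v := rfl

lemma y_Wf (v : Fin 3 → R) : v 1 * Wf v = Nf v ^ 2 + Qf v ^ 3 := by
  simp only [Wf, Bf, Nf, Qf]; ring

lemma y_Bf (v : Fin 3 → R) : v 1 * Bf v = Qf v ^ 2 + v 0 * Nf v := by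
  simp only [Bf, Nf, Qf]; ring

lemma x_Wf (v : Fin 3 → R) : v 0 * Wf v = v 1 ^ 2 * Qf v ^ 2 + Nf v * Bf v := by
  simp only [Wf, Bf, Nf, Qf]; ring

lemma x_Bf (v : Fin 3 → R) : v 0 * Bf v = v 1 ^ 2 * Qf v + v 2 * Nf v := by
  simp only [Bf, Nf, Qf]; ring

lemma rel (v : Fin 3 → R) :
    Qf v ^ 3 + v 1 ^ 3 * Nf v = v 1 * Qf v * Bf v - Nf v ^ 2 := by
  simp only [Bf, Nf, Qf]; ring

lemma Qf_S (v : Fin 3 → R) : Qf (S v) = v 1 * Nf v ^ 5 := by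
  have h1 := y_Wf v
  have h2 : Qf v * Bf v = Wf v + v 1 ^ 2 * Nf v := by simp only [Wf]; ring
  have : Qf (S v) = Nf v ^ 2 * Qf v * Zf v - (Nf v * Wf v) ^ 2 := by simp [Qf]
  rw [this, Zf]
  linear_combination Nf v ^ 2 * Wf v * h2 + v 1 * Nf v ^ 3 * h1

lemma Nf_S (v : Fin 3 → R) : Nf (S v) = Nf v ^ 8 := by
  have h1 := y_Wf v
  have : Nf (S v) = Nf v * Wf v * Qf (S v) - (Nf v ^ 2 * Qf v) ^ 3 := by simp [Nf]
  rw [this, Qf_S]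
  linear_combination Nf v ^ 6 * h1

lemma Bf_S (v : Fin 3 → R) : Bf (S v) = Nf v ^ 7 * Bf v := by
  have h1 := y_Bf v
  have h2 := x_Wf v
  have : Bf (S v) = Zf v * Qf (S v) - (Nf v * Wf v) * (Nf v ^ 2 * Qf v) ^ 2 := by simp [Bf]
  rw [this, Qf_S, Zf]
  linear_combination Nf v ^ 5 * Wf v * h1 + Nf v ^ 6 * h2

lemma Wf_S (v : Fin 3 → R) : Wf (S v) = Nf v ^ 13 * v 0 := by
  have h1 := y_Bf v
  rw [Wf, Qf_S, Bf_S, Nf_S, S_one]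
  linear_combination Nf v ^ 12 * h1

lemma Zf_S (v : Fin 3 → R) : Zf (S v) = Nf v ^ 21 * v 2 := by
  have h1 := x_Bf v
  rw [Zf, Qf_S, Bf_S, Nf_S, Wf_S, S_one]
  linear_combination Nf v ^ 20 * h1

lemma S_S (v : Fin 3 → R) : S (S v) = Nf v ^ 21 • v := by
  funext i
  fin_cases i
  · change Nf (S v) * Wf (S v) = Nf v ^ 21 * v 0
    rw [Nf_S, Wf_S]; ring
  · change Nf (S v) ^ 2 * Qf (S v) = Nf v ^ 21 * v 1
    rw [Nf_S, Qf_S]; ring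
  · exact Zf_S v

lemma L_T (a b : R) (v : Fin 3 → R) : L b a (T a b v) = -(a * b) * L a b v ^ 2 := by
  simp [L, T, Qf]; ring

lemma Nf_T (a b : R) (v : Fin 3 → R) :
    Nf (T a b v) = -(a * b) ^ 3 * L a b v ^ 3 * Nf v := by
  simp [L, T, Qf, Nf]; ring

lemma T_T (a b : R) (v : Fin 3 → R) :
    T b a (T a b v) = (-(a * b) ^ 3 * L a b v ^ 3) • v := by
  funext i
  fin_cases i <;> simp [L, T, Qf] <;> ring

lemma Qf_smul (c : R) (v : Fin 3 → R) : Qf (c • v) = c ^ 2 * Qf v := by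
  simp [Qf]; ring
lemma Nf_smul (c : R) (v : Fin 3 → R) : Nf (c • v) = c ^ 3 * Nf v := by
  simp [Nf, Qf_smul]; ring
lemma Bf_smul (c : R) (v : Fin 3 → R) : Bf (c • v) = c ^ 3 * Bf v := by
  simp [Bf, Qf_smul]; ring
lemma Wf_smul (c : R) (v : Fin 3 → R) : Wf (c • v) = c ^ 5 * Wf v := by
  simp [Wf, Qf_smul, Nf_smul, Bf_smul]; ring
lemma Zf_smul (c : R) (v : Fin 3 → R) : Zf (c • v) = c ^ 8 * Zf v := by
  simp [Zf, Qf_smul, Nf_smul, Bf_smul, Wf_smul]; ring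
lemma S_smul (c : R) (v : Fin 3 → R) : S (c • v) = c ^ 8 • S v := by
  funext i
  fin_cases i
  · change Nf (c • v) * Wf (c • v) = c ^ 8 * (Nf v * Wf v)
    rw [Nf_smul, Wf_smul]; ring
  · change Nf (c • v) ^ 2 * Qf (c • v) = c ^ 8 * (Nf v ^ 2 * Qf v)
    rw [Nf_smul, Qf_smul]; ring
  · exact Zf_smul c v
lemma L_smul (a b c : R) (v : Fin 3 → R) : L a b (c • v) = c * L a b v := by
  simp [L]; ring
lemma T_smul (a b c : R) (v : Fin 3 → R) : T a b (c • v) = c ^ 2 • T a b v := by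
  funext i
  fin_cases i <;> simp [T, Qf] <;> ring
lemma F_smul (a b c : R) (v : Fin 3 → R) : F a b (c • v) = c ^ 8 * F a b v := by
  simp [F, S_smul, L_smul]

lemma F_S (a b : R) (v : Fin 3 → R) : F a b (S v) = Nf v ^ 21 * L a b v := by
  rw [F, S_S, L_smul]

/-- expansion of the conic pulled back by the quadratic map -/
lemma Qf_T (a b : R) (v : Fin 3 → R) : Qf (T a b v) =
    -a ^ 5 * b * (b ^ 6 * Qf v * (v 2 ^ 2 - 2 * v 0 * v 1) + (a ^ 6 - b ^ 6) * v 0 ^ 3 * v 1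
      - 6 * a ^ 5 * b * Qf v * (v 2 * v 0 - v 1 ^ 2) + 15 * a ^ 4 * b ^ 2 * Qf v * v 0 ^ 2
      - 20 * a ^ 3 * b ^ 3 * Qf v * v 0 * v 1 + 15 * a ^ 2 * b ^ 4 * Qf v * v 1 ^ 2
      - 6 * a * b ^ 5 * Qf v ^ 2)
    + Nf v * ((3 * a ^ 4 * b ^ 8 - 3 * a ^ 7 * b ^ 5 - 6 * a ^ 10 * b ^ 2) * v 2
      + (a ^ 2 * b ^ 10 - 7 * a ^ 5 * b ^ 7 - 8 * a ^ 8 * b ^ 4) * v 1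
      + (-3 * a ^ 3 * b ^ 9 + 9 * a ^ 6 * b ^ 6 + 12 * a ^ 9 * b ^ 3) * v 0) := by
  simp [T, Nf, Qf]; ring

/-- auxiliary cubic -/
def c1 (a b : R) (v : Fin 3 → R) : R :=
      (1) * v 2 ^ 3 * b ^ 9 + (-9) * v 1 * v 2 ^ 2 * a * b ^ 8
      + (36) * v 1 ^ 2 * v 2 * a ^ 2 * b ^ 7 + (-9) * v 1 ^ 2 * v 2 * a ^ 8 * b
      + (-3) * v 1 ^ 3 * b ^ 9 + (-84) * v 1 ^ 3 * a ^ 3 * b ^ 6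
      + (9) * v 0 * v 2 ^ 2 * a ^ 8 * b + (9) * v 0 * v 1 ^ 2 * a * b ^ 8
      + (126) * v 0 * v 1 ^ 2 * a ^ 4 * b ^ 5 + (36) * v 0 * v 1 ^ 2 * a ^ 7 * b ^ 2
      + (9) * v 0 ^ 2 * v 2 * a * b ^ 8 + (-36) * v 0 ^ 2 * v 2 * a ^ 7 * b ^ 2
      + (-36) * v 0 ^ 2 * v 1 * a ^ 2 * b ^ 7 + (-126) * v 0 ^ 2 * v 1 * a ^ 5 * b ^ 4
      + (-9) * v 0 ^ 2 * v 1 * a ^ 8 * b + (-3) * v 0 ^ 3 * b ^ 9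
      + (84) * v 0 ^ 3 * a ^ 6 * b ^ 3

/-- auxiliary cubic -/
def c2 (a b : R) (v : Fin 3 → R) : R :=
      (-6) * v 2 ^ 3 * a ^ 7 * b ^ 11 + (3) * v 2 ^ 3 * a ^ 10 * b ^ 8
      + (-9) * v 2 ^ 3 * a ^ 16 * b ^ 2 + (-2) * v 1 * v 2 ^ 2 * a ^ 5 * b ^ 13
      + (30) * v 1 * v 2 ^ 2 * a ^ 8 * b ^ 10 + (-22) * v 1 * v 2 ^ 2 * a ^ 11 * b ^ 7
      + (-60) * v 1 ^ 2 * v 2 * a ^ 9 * b ^ 9 + (-60) * v 1 ^ 2 * v 2 * a ^ 12 * b ^ 6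
      + (-3) * v 1 ^ 3 * a ^ 4 * b ^ 14 + (9) * v 1 ^ 3 * a ^ 7 * b ^ 11
      + (36) * v 1 ^ 3 * a ^ 10 * b ^ 8 + (24) * v 1 ^ 3 * a ^ 13 * b ^ 5
      + (15) * v 0 * v 2 ^ 2 * a ^ 6 * b ^ 12 + (-18) * v 0 * v 2 ^ 2 * a ^ 9 * b ^ 9
      + (3) * v 0 * v 2 ^ 2 * a ^ 12 * b ^ 6 + (36) * v 0 * v 2 ^ 2 * a ^ 15 * b ^ 3
      + (6) * v 0 * v 1 * v 2 * a ^ 4 * b ^ 14 + (-39) * v 0 * v 1 * v 2 * a ^ 7 * b ^ 11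
      + (54) * v 0 * v 1 * v 2 * a ^ 10 * b ^ 8 + (108) * v 0 * v 1 * v 2 * a ^ 13 * b ^ 5
      + (9) * v 0 * v 1 * v 2 * a ^ 16 * b ^ 2 + (1) * v 0 * v 1 ^ 2 * a ^ 2 * b ^ 16
      + (4) * v 0 * v 1 ^ 2 * a ^ 5 * b ^ 13 + (9) * v 0 * v 1 ^ 2 * a ^ 8 * b ^ 10
      + (16) * v 0 * v 1 ^ 2 * a ^ 11 * b ^ 7 + (-44) * v 0 * v 1 ^ 2 * a ^ 14 * b ^ 4
      + (-18) * v 0 ^ 2 * v 2 * a ^ 5 * b ^ 13 + (13) * v 0 ^ 2 * v 2 * a ^ 8 * b ^ 10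
      + (2) * v 0 ^ 2 * v 2 * a ^ 11 * b ^ 7 + (-83) * v 0 ^ 2 * v 2 * a ^ 14 * b ^ 4
      + (-6) * v 0 ^ 2 * v 1 * a ^ 3 * b ^ 15 + (15) * v 0 ^ 2 * v 1 * a ^ 6 * b ^ 12
      + (6) * v 0 ^ 2 * v 1 * a ^ 9 * b ^ 9 + (-21) * v 0 ^ 2 * v 1 * a ^ 12 * b ^ 6
      + (-6) * v 0 ^ 2 * v 1 * a ^ 15 * b ^ 3 + (9) * v 0 ^ 3 * a ^ 4 * b ^ 14
      + (-3) * v 0 ^ 3 * a ^ 7 * b ^ 11 + (-6) * v 0 ^ 3 * a ^ 10 * b ^ 8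
      + (6) * v 0 ^ 3 * a ^ 13 * b ^ 5

/-- expansion of the cubic `Bf` pulled back by the quadratic map -/
lemma Bf_T (a b : R) (v : Fin 3 → R) : Bf (T a b v) =
    a ^ 8 * b * (Bf v * c1 a b v + (-a ^ 9 - b ^ 9) * v 0 ^ 4 * v 1 ^ 2)
      + Nf v * c2 a b v := by
  simp [T, Nf, Qf, Bf, c1, c2]; ring

lemma Nf_TS (a b : R) (v : Fin 3 → R) :
    Nf (T a b (S v)) = Nf v ^ 8 * (-(a * b) ^ 3 * F a b v ^ 3) := by
  rw [Nf_T, Nf_S, F]; ring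

lemma y_TS (a b : R) (v : Fin 3 → R) : T a b (S v) 1 = Nf v ^ 2 * (a ^ 2 * b *
    (b ^ 3 * (v 1 * Nf v ^ 3) - 3 * a * b ^ 2 * (Nf v * Qf v) ^ 2
      + 3 * a ^ 2 * b * (Nf v * Wf v * Qf v) - a ^ 3 * Wf v ^ 2)) := by
  have : T a b (S v) 1 = a ^ 2 * b * (b ^ 3 * Qf (S v) - 3 * a * b ^ 2 * S v 1 ^ 2
    + 3 * a ^ 2 * b * S v 0 * S v 1 - a ^ 3 * S v 0 ^ 2) := rfl
  rw [this, Qf_S, S_zero, S_one]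
  ring

lemma Qf_TS (a b : R) (v : Fin 3 → R) : ∃ U, Qf (T a b (S v)) = Nf v ^ 5 * U := by
  rw [Qf_T, Qf_S, Nf_S]
  have hx : Nf v ∣ S v 0 := ⟨_, rfl⟩
  have hy : Nf v ^ 2 ∣ S v 1 := ⟨_, rfl⟩
  have hxy : Nf v ^ 5 ∣ S v 0 ^ 3 * S v 1 := by
    obtain ⟨x, hx⟩ := hx
    obtain ⟨y, hy⟩ := hy
    rw [hx, hy]
    exact ⟨x ^ 3 * y, by ring⟩
  obtain ⟨u, hu⟩ := hxy
  refine ⟨?_, ?_⟩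
  rotate_left
  · rw [show ∀ c1 c2 c3 c4 c5 c6 c7 c8 c9 m : R,
      c1 * (c2 * (v 1 * Nf v ^ 5) * c3 + c4 * S v 0 ^ 3 * S v 1 - c5 * (v 1 * Nf v ^ 5) * c6
      + c7 * (v 1 * Nf v ^ 5) * S v 0 ^ 2 - c8 * (v 1 * Nf v ^ 5) * S v 0 * S v 1
      + c9 * (v 1 * Nf v ^ 5) * S v 1 ^ 2 - 6 * a * b ^ 5 * (v 1 * Nf v ^ 5) ^ 2) + Nf v ^ 8 * m
      = Nf v ^ 5 * (c1 * (c2 * v 1 * c3 + c4 * u - c5 * v 1 * c6 + c7 * v 1 * S v 0 ^ 2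
        - c8 * v 1 * S v 0 * S v 1 + c9 * v 1 * S v 1 ^ 2
        - 6 * a * b ^ 5 * v 1 ^ 2 * Nf v ^ 5) + Nf v ^ 3 * m) from ?_]
    intro c1 c2 c3 c4 c5 c6 c7 c8 c9 m
    linear_combination c1 * c4 * hu

lemma Bf_TS (a b : R) (v : Fin 3 → R) : ∃ V, Bf (T a b (S v)) = Nf v ^ 7 * V := by
  rw [Bf_T, Bf_S, Nf_S, S_zero, S_one]
  exact ⟨a ^ 8 * b * (Bf v * c1 a b (S v) + (-a ^ 9 - b ^ 9) * Nf v * Wf v ^ 4 * Qf v ^ 2)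
      + Nf v * c2 a b (S v), by ring⟩

/-- The key divisibility. -/
lemma exists_P [IsDomain R] (a b : R) (v : Fin 3 → R) (hN : Prime (Nf v))
    (ha : ¬ Nf v ∣ a) (hb : ¬ Nf v ∣ b) (hW : ¬ Nf v ∣ Wf v) :
    ∃ P : Fin 3 → R, S (T a b (S v)) = Nf v ^ 21 • P := by
  obtain ⟨U, hU⟩ := Qf_TS a b v
  obtain ⟨V, hV⟩ := Bf_TS a b v
  have hNN := Nf_TS a b v
  have hY := y_TS a b v
  set n := Nf v with hn
  set w := T a b (S v) with hw
  set Y := a ^ 2 * b *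
    (b ^ 3 * (v 1 * n ^ 3) - 3 * a * b ^ 2 * (n * Qf v) ^ 2
      + 3 * a ^ 2 * b * (n * Wf v * Qf v) - a ^ 3 * Wf v ^ 2) with hYdef
  set g := -(a * b) ^ 3 * F a b v ^ 3 with hg
  have hn0 : n ≠ 0 := hN.ne_zero
  have hYn : ¬ n ∣ Y := by
    intro h
    have h2 : n ∣ a ^ 2 * b * (a ^ 3 * Wf v ^ 2) := by
      have : a ^ 2 * b * (a ^ 3 * Wf v ^ 2) = n * (a ^ 2 * b *
        (b ^ 3 * (v 1 * n ^ 2) - 3 * a * b ^ 2 * (n * Qf v ^ 2)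
        + 3 * a ^ 2 * b * (Wf v * Qf v))) - Y := by rw [hYdef]; ring
      rw [this]
      exact dvd_sub (dvd_mul_right _ _) h
    rcases hN.dvd_or_dvd h2 with h | h
    · rcases hN.dvd_or_dvd h with h | h
      · exact ha (hN.dvd_of_dvd_pow h)
      · exact hb h
    · rcases hN.dvd_or_dvd h with h | h
      · exact ha (hN.dvd_of_dvd_pow h)
      · exact hW (hN.dvd_of_dvd_pow h)
  have e1 : Y * (U * V - Y ^ 2 * g) = n * (U ^ 3 + n * g ^ 2) := by
    have := rel w
    rw [hU, hV, hNN, hY] at this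
    apply mul_left_cancel₀ (pow_ne_zero 14 hn0)
    linear_combination -this
  obtain ⟨W', hW'⟩ : n ∣ U * V - Y ^ 2 * g :=
    (hN.dvd_or_dvd ⟨_, e1⟩).resolve_left hYn
  have e2 : Y * W' = U ^ 3 + n * g ^ 2 := by
    apply mul_left_cancel₀ hn0
    rw [← e1, hW']; ring
  have e3 : Y * (V * W' - Y * U ^ 2 * g) = n * (U ^ 2 * W' + V * g ^ 2) := by
    linear_combination V * e2 + U ^ 2 * hW'
  obtain ⟨Z', hZ'⟩ : n ∣ V * W' - Y * U ^ 2 * g :=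
    (hN.dvd_or_dvd ⟨_, e3⟩).resolve_left hYn
  have hWw : Wf w = n ^ 13 * W' := by
    rw [Wf, hU, hV, hNN, hY]
    linear_combination n ^ 12 * hW'
  refine ⟨![g * W', U * g ^ 2, Z'], ?_⟩
  funext i
  fin_cases i
  · change Nf w * Wf w = n ^ 21 * (g * W')
    rw [hNN, hWw]; ring
  · change Nf w ^ 2 * Qf w = n ^ 21 * (U * g ^ 2)
    rw [hNN, hU]; ring
  · change Zf w = n ^ 21 * Z'
    rw [Zf, hWw, hU, hV, hNN, hY]
    linear_combination n ^ 20 * hZ'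

/-- Consequences of `N ^ 21 P = S T S`. -/
lemma S_P [IsDomain R] (a b : R) (v P : Fin 3 → R) (hN : Nf v ≠ 0)
    (hP : S (T a b (S v)) = Nf v ^ 21 • P) :
    S P = (-(a * b) ^ 3 * F a b v ^ 3) ^ 21 • T a b (S v) := by
  have h := congrArg S hP
  rw [S_S, S_smul, Nf_TS] at h
  funext i
  have := congrFun h i
  simp only [Pi.smul_apply, smul_eq_mul] at this ⊢
  apply mul_left_cancel₀ (pow_ne_zero 168 hN)
  linear_combination -this

lemma Nf_P [IsDomain R] (a b : R) (v P : Fin 3 → R) (hN : Nf v ≠ 0)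
    (hP : S (T a b (S v)) = Nf v ^ 21 • P) :
    Nf P = (-(a * b) ^ 3 * F a b v ^ 3) ^ 8 * Nf v := by
  have h := congrArg Nf hP
  rw [Nf_S, Nf_smul, Nf_TS] at h
  apply mul_left_cancel₀ (pow_ne_zero 63 hN)
  linear_combination -h

lemma F_P [IsDomain R] (a b : R) (v P : Fin 3 → R) (hN : Nf v ≠ 0)
    (hP : S (T a b (S v)) = Nf v ^ 21 • P) :
    F b a P = (a * b) ^ 64 * F a b v ^ 65 := by
  rw [F, S_P a b v P hN hP, L_smul, L_T]
  change _ * (_ * F a b v ^ 2) = _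
  ring

lemma P_P [IsDomain R] (a b : R) (v P P' : Fin 3 → R) (hN : Nf v ≠ 0)
    (ha : a ≠ 0) (hb : b ≠ 0) (hF : F a b v ≠ 0)
    (hP : S (T a b (S v)) = Nf v ^ 21 • P)
    (hP' : S (T b a (S P)) = Nf P ^ 21 • P') :
    P' = ((a * b) ^ 528 * F a b v ^ 528) • v := by
  rw [S_P a b v P hN hP, T_smul, T_T, S_smul, S_smul, S_S, Nf_P a b v P hN hP] at hP'
  funext i
  have := congrFun hP' i
  simp only [Pi.smul_apply, smul_eq_mul] at this ⊢
  have hab : a * b ≠ 0 := mul_ne_zero ha hb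
  have h0 : ((a * b) ^ 504 * F a b v ^ 504) * Nf v ^ 21 ≠ 0 :=
    mul_ne_zero (mul_ne_zero (pow_ne_zero _ hab) (pow_ne_zero _ hF)) (pow_ne_zero _ hN)
  apply mul_left_cancel₀ h0
  change _ * ((-(a * b) ^ 3 * F a b v ^ 3) ^ 8 * (Nf v ^ 21 * v i)) = _ at this
  linear_combination -this

variable {R' : Type*} [CommRing R'] (φ : R →+* R')

lemma map_Qf (v : Fin 3 → R) : φ (Qf v) = Qf (φ ∘ v) := by simp [Qf]
lemma map_Nf (v : Fin 3 → R) : φ (Nf v) = Nf (φ ∘ v) := by simp [Nf, map_Qf]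
lemma map_Bf (v : Fin 3 → R) : φ (Bf v) = Bf (φ ∘ v) := by simp [Bf, map_Qf]
lemma map_Wf (v : Fin 3 → R) : φ (Wf v) = Wf (φ ∘ v) := by
  simp [Wf, map_Qf, map_Bf, map_Nf]
lemma map_Zf (v : Fin 3 → R) : φ (Zf v) = Zf (φ ∘ v) := by
  simp [Zf, map_Qf, map_Bf, map_Nf, map_Wf]
lemma map_S (v : Fin 3 → R) : φ ∘ S v = S (φ ∘ v) := by
  funext i
  fin_cases i
  · simp [map_Nf, map_Wf]
  · simp [map_Nf, map_Qf]
  · simp [map_Zf]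
lemma map_L (a b : R) (v : Fin 3 → R) : φ (L a b v) = L (φ a) (φ b) (φ ∘ v) := by
  simp [L, map_ofNat φ 2]
lemma map_F (a b : R) (v : Fin 3 → R) : φ (F a b v) = F (φ a) (φ b) (φ ∘ v) := by
  simp [F, map_L, map_S]
lemma map_T (a b : R) (v : Fin 3 → R) : φ ∘ T a b v = T (φ a) (φ b) (φ ∘ v) := by
  funext i
  fin_cases i <;> simp [T, map_Qf, map_ofNat φ 2, map_ofNat φ 3]

end Identities

section Poly

variable {k : Type} [Field k]

/-- The generic point. -/
noncomputable abbrev V3 (k : Type) [Field k] : Fin 3 → MvPolynomial (Fin 3) k := X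

lemma irreducible_N : Irreducible (Nf (V3 k)) := by
  have e : Nf (V3 k) = (X 0 * X 1) * X 2 + (-(X 0 ^ 3 + X 1 ^ 3)) := by
    simp only [Nf, Qf]; ring
  rw [e]
  have h01 : ∀ i j : Fin 3, i ≠ j → ¬ (X i : MvPolynomial (Fin 3) k) ∣ X j := by
    intro i j hij h
    have := MvPolynomial.X_dvd_X.mp h
    simp_all
  refine irreducible_mul_X_add _ _ 2 ?_ ?_ ?_ ?_
  · exact mul_ne_zero (X_ne_zero _) (X_ne_zero _)
  · intro h
    have := vars_mul _ _ h
    simp [vars_X] at this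
  · rw [vars_neg]
    intro h
    have := vars_add_subset _ _ h
    rw [Finset.mem_union] at this
    rcases this with h | h
    · have := vars_pow _ _ h
      simp [vars_X] at this
    · have := vars_pow _ _ h
      simp [vars_X] at this
  · have p0 : Prime (X 0 : MvPolynomial (Fin 3) k) := X_prime
    have p1 : Prime (X 1 : MvPolynomial (Fin 3) k) := X_prime
    refine IsRelPrime.mul_left ?_ ?_
    · refine (p0.irreducible.isRelPrime_iff_not_dvd).2 fun h => ?_
      rw [dvd_neg, dvd_add_right (dvd_pow_self _ (by norm_num))] at h
      exact h01 0 1 (by decide) (p0.dvd_of_dvd_pow h)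
    · refine (p1.irreducible.isRelPrime_iff_not_dvd).2 fun h => ?_
      rw [dvd_neg, dvd_add_left (dvd_pow_self _ (by norm_num))] at h
      exact h01 1 0 (by decide) (p1.dvd_of_dvd_pow h)

lemma prime_N : Prime (Nf (V3 k)) := irreducible_N.prime

/-- The parametrization of the nodal cubic. -/
def arc {R : Type*} [CommRing R] (t : R) : Fin 3 → R := ![t, t ^ 2, 1 + t ^ 3]

section arc
variable {R : Type*} [CommRing R] (t : R)
lemma Qf_arc : Qf (arc t) = t ^ 5 := by simp [Qf, arc]; ring
lemma Nf_arc : Nf (arc t) = 0 := by rw [Nf, Qf_arc]; simp [arc]; ring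
lemma Bf_arc : Bf (arc t) = t ^ 8 := by rw [Bf, Qf_arc]; simp [arc]; ring
lemma Wf_arc : Wf (arc t) = t ^ 13 := by rw [Wf, Qf_arc, Nf_arc, Bf_arc]; ring
lemma Zf_arc : Zf (arc t) = t ^ 21 := by rw [Zf, Nf_arc, Bf_arc, Wf_arc]; ring
lemma F_arc (a b : R) : F a b (arc t) = a ^ 2 * b ^ 2 * t ^ 21 := by
  simp [F, L, Nf_arc, Zf_arc]
end arc

/-- restriction to the nodal cubic -/
noncomputable def res : MvPolynomial (Fin 3) k →ₐ[k] Polynomial k := aeval (arc Polynomial.X)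

lemma res_comp : (res : MvPolynomial (Fin 3) k →ₐ[k] Polynomial k).toRingHom ∘ V3 k
    = arc Polynomial.X := by
  funext i; simp [res]

lemma not_N_dvd {p : MvPolynomial (Fin 3) k} (h : res p ≠ 0) : ¬ Nf (V3 k) ∣ p := by
  rintro ⟨q, rfl⟩
  apply h
  have : res (Nf (V3 k)) = 0 := by
    have := map_Nf (res : MvPolynomial (Fin 3) k →ₐ[k] Polynomial k).toRingHom (V3 k)
    rw [res_comp, Nf_arc] at this
    exact this
  rw [map_mul, this, zero_mul]

lemma not_N_dvd_C {a : k} (ha : a ≠ 0) : ¬ Nf (V3 k) ∣ C a := by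
  apply not_N_dvd
  simpa [res] using ha

lemma not_N_dvd_W : ¬ Nf (V3 k) ∣ Wf (V3 k) := by
  apply not_N_dvd
  have := map_Wf (res : MvPolynomial (Fin 3) k →ₐ[k] Polynomial k).toRingHom (V3 k)
  rw [res_comp, Wf_arc] at this
  change res (Wf (V3 k)) = _ at this
  rw [this]
  exact pow_ne_zero _ Polynomial.X_ne_zero

lemma not_N_dvd_F {a b : k} (ha : a ≠ 0) (hb : b ≠ 0) :
    ¬ Nf (V3 k) ∣ F (C a) (C b) (V3 k) := by
  apply not_N_dvd
  have := map_F (res : MvPolynomial (Fin 3) k →ₐ[k] Polynomial k).toRingHom (C a) (C b) (V3 k)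
  rw [res_comp, F_arc] at this
  change res (F (C a) (C b) (V3 k)) = _ at this
  rw [this]
  have h1 : ∀ c : k, res (C c) = Polynomial.C c := by intro c; simp [res]
  change res (C a) ^ 2 * res (C b) ^ 2 * _ ≠ 0
  rw [h1, h1]
  exact mul_ne_zero (mul_ne_zero (pow_ne_zero _ (by simpa using ha))
    (pow_ne_zero _ (by simpa using hb))) (pow_ne_zero _ Polynomial.X_ne_zero)

/-! homogeneity -/

section hom
variable {v : Fin 3 → MvPolynomial (Fin 3) k} {d : ℕ}

lemma hom_Q (hv : ∀ i, (v i).IsHomogeneous d) : (Qf v).IsHomogeneous (2 * d) := by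
  have h1 : (v 1 * v 2).IsHomogeneous (2 * d) := by
    have := (hv 1).mul (hv 2); rwa [← two_mul] at this
  have h2 : (v 0 ^ 2).IsHomogeneous (2 * d) := by
    have := (hv 0).pow 2; rwa [mul_comm] at this
  exact h1.sub h2

lemma hom_N (hv : ∀ i, (v i).IsHomogeneous d) : (Nf v).IsHomogeneous (3 * d) := by
  have h1 := (hv 0).mul (hom_Q hv)
  have h2 := (hv 1).pow 3
  rw [show d + 2 * d = 3 * d by ring] at h1
  rw [mul_comm] at h2
  exact h1.sub h2

lemma hom_B (hv : ∀ i, (v i).IsHomogeneous d) : (Bf v).IsHomogeneous (3 * d) := by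
  have h1 := (hv 2).mul (hom_Q hv)
  have h2 := (hv 0).mul ((hv 1).pow 2)
  rw [show d + 2 * d = 3 * d by ring] at h1
  rw [show d + d * 2 = 3 * d by ring] at h2
  exact h1.sub h2

lemma hom_W (hv : ∀ i, (v i).IsHomogeneous d) : (Wf v).IsHomogeneous (5 * d) := by
  have h1 := (hom_Q hv).mul (hom_B hv)
  have h2 := ((hv 1).pow 2).mul (hom_N hv)
  rw [show 2 * d + 3 * d = 5 * d by ring] at h1
  rw [show d * 2 + 3 * d = 5 * d by ring] at h2
  exact h1.sub h2

lemma hom_Z (hv : ∀ i, (v i).IsHomogeneous d) : (Zf v).IsHomogeneous (8 * d) := by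
  have h1 := (hom_B hv).mul (hom_W hv)
  have h2 := ((hv 1).mul ((hom_Q hv).pow 2)).mul (hom_N hv)
  rw [show 3 * d + 5 * d = 8 * d by ring] at h1
  rw [show d + 2 * d * 2 + 3 * d = 8 * d by ring] at h2
  exact h1.sub h2

lemma hom_S (hv : ∀ i, (v i).IsHomogeneous d) (i : Fin 3) : (S v i).IsHomogeneous (8 * d) := by
  fin_cases i
  · have h1 := (hom_N hv).mul (hom_W hv)
    rw [show 3 * d + 5 * d = 8 * d by ring] at h1
    exact h1
  · have h1 := ((hom_N hv).pow 2).mul (hom_Q hv)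
    rw [show 3 * d * 2 + 2 * d = 8 * d by ring] at h1
    exact h1
  · exact hom_Z hv

lemma hom_L (hv : ∀ i, (v i).IsHomogeneous d) (a b : k) : (L (C a) (C b) v).IsHomogeneous d := by
  have : L (C a) (C b) v = C (a ^ 4 - 2 * a * b ^ 3) * v 0 + C (b ^ 4 - 2 * a ^ 3 * b) * v 1
      + C (a ^ 2 * b ^ 2) * v 2 := by
    simp [L, map_ofNat (C : k →+* MvPolynomial (Fin 3) k) 2]
  rw [this]
  exact (((hv 0).C_mul _).add ((hv 1).C_mul _)).add ((hv 2).C_mul _)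

lemma hom_quad (hv : ∀ i, (v i).IsHomogeneous d) (c1 c2 c3 c4 c5 c6 : k) : (C c1 * v 0 ^ 2 + C c2 * v 1 ^ 2 + C c3 * v 2 ^ 2
    + C c4 * (v 0 * v 1) + C c5 * (v 0 * v 2) + C c6 * (v 1 * v 2)).IsHomogeneous (2 * d) := by
  have h1 : ∀ i j, (v i * v j).IsHomogeneous (2 * d) := by
    intro i j
    have := (hv i).mul (hv j); rwa [← two_mul] at this
  simp only [pow_two]
  exact ((((((h1 _ _).C_mul _).add ((h1 _ _).C_mul _)).add ((h1 _ _).C_mul _)).add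
    ((h1 _ _).C_mul _)).add ((h1 _ _).C_mul _)).add ((h1 _ _).C_mul _)

lemma hom_T (hv : ∀ i, (v i).IsHomogeneous d) (a b : k) (i : Fin 3) : (T (C a) (C b) v i).IsHomogeneous (2 * d) := by
  fin_cases i
  · convert hom_quad hv (-a * b ^ 2 * (3 * a ^ 2 * b)) (-a * b ^ 2 * (b ^ 3 + a ^ 3)) 0
      (-a * b ^ 2 * (-3 * a * b ^ 2)) (-a * b ^ 2 * (-a ^ 3)) 0 using 1
    simp [T, Qf, map_ofNat (C : k →+* MvPolynomial (Fin 3) k) 3]; ring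
  · convert hom_quad hv (a ^ 2 * b * (-b ^ 3 - a ^ 3)) (a ^ 2 * b * (-3 * a * b ^ 2)) 0
      (a ^ 2 * b * (3 * a ^ 2 * b)) 0 (a ^ 2 * b * b ^ 3) using 1
    simp [T, Qf, map_ofNat (C : k →+* MvPolynomial (Fin 3) k) 3]; ring
  · convert hom_quad hv (-3 * a * b ^ 5 - 3 * a ^ 4 * b ^ 2) (-3 * a ^ 2 * b ^ 4 - 3 * a ^ 5 * b)
      (-a ^ 3 * b ^ 3) (2 * a ^ 3 * b ^ 3 + a ^ 6 + b ^ 6) (3 * a ^ 2 * b ^ 4)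
      (3 * a ^ 4 * b ^ 2) using 1
    simp [T, Qf, map_ofNat (C : k →+* MvPolynomial (Fin 3) k) 3,
      map_ofNat (C : k →+* MvPolynomial (Fin 3) k) 2]; ring

end hom

lemma hom_X (i : Fin 3) : (V3 k i).IsHomogeneous 1 := isHomogeneous_X k i

lemma hom_F (a b : k) : (F (C a) (C b) (V3 k)).IsHomogeneous 8 := by
  have := hom_L (hom_S (hom_X (k := k))) a b
  simpa [F] using this

/-- a factor of a homogeneous polynomial with homogeneous cofactor -/
lemma hom_of_mul {p q : MvPolynomial (Fin 3) k} {m n : ℕ} (hp : p.IsHomogeneous m) (hp0 : p ≠ 0)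
    (h : (p * q).IsHomogeneous (m + n)) : q.IsHomogeneous n := by
  have h1 := DirectSum.coe_decompose_mul_add_of_left_mem (homogeneousSubmodule (Fin 3) k)
    (a := p) (b := q) (i := m) (j := n) hp
  have h2 := DirectSum.decompose_of_mem_same (homogeneousSubmodule (Fin 3) k)
    (x := p * q) (i := m + n) h
  rw [h2] at h1
  have h3 := mul_left_cancel₀ hp0 h1
  rw [h3]
  exact (DirectSum.decompose (homogeneousSubmodule (Fin 3) k) q n).2

lemma exists_P_poly (a b : k) (ha : a ≠ 0) (hb : b ≠ 0) :
    ∃ P : Fin 3 → MvPolynomial (Fin 3) k, (∀ i, (P i).IsHomogeneous 65) ∧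
      S (T (C a) (C b) (S (V3 k))) = Nf (V3 k) ^ 21 • P := by
  obtain ⟨P, hP⟩ := exists_P (C a) (C b) (V3 k) prime_N (not_N_dvd_C ha) (not_N_dvd_C hb)
    not_N_dvd_W
  refine ⟨P, fun i => ?_, hP⟩
  have h1 := (hom_N (hom_X (k := k))).pow 21
  refine hom_of_mul (m := 3 * 1 * 21) h1 (pow_ne_zero _ prime_N.ne_zero) ?_
  have h2 := hom_S (hom_T (hom_S (hom_X (k := k))) a b) i
  rw [hP] at h2
  exact h2

lemma F_ne_zero {a b : k} (ha : a ≠ 0) (hb : b ≠ 0) : F (C a) (C b) (V3 k) ≠ 0 := fun h =>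
  not_N_dvd_F ha hb (h ▸ dvd_zero _)

lemma V3_comp {A : Type*} [CommRing A] [Algebra k A] (v : Fin 3 → A) :
    ((aeval v : MvPolynomial (Fin 3) k →ₐ[k] A) : MvPolynomial (Fin 3) k →+* A) ∘ V3 k = v := by
  funext i; simp

lemma aeval_C' {A : Type*} [CommRing A] [Algebra k A] (v : Fin 3 → A) (a : k) :
    ((aeval v : MvPolynomial (Fin 3) k →ₐ[k] A) : MvPolynomial (Fin 3) k →+* A) (C a)
      = algebraMap k A a := by
  simp

lemma aeval_F {A : Type*} [CommRing A] [Algebra k A] (v : Fin 3 → A) (a b : k) :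
    aeval v (F (C a) (C b) (V3 k)) = F (algebraMap k A a) (algebraMap k A b) v := by
  have := map_F ((aeval v : MvPolynomial (Fin 3) k →ₐ[k] A) : MvPolynomial (Fin 3) k →+* A)
    (C a) (C b) (V3 k)
  rw [V3_comp, aeval_C', aeval_C'] at this
  exact this

lemma aeval_N {A : Type*} [CommRing A] [Algebra k A] (v : Fin 3 → A) :
    aeval (R := k) v (Nf (V3 k)) = Nf v := by
  have := map_Nf ((aeval v : MvPolynomial (Fin 3) k →ₐ[k] A) : MvPolynomial (Fin 3) k →+* A)
    (V3 k)
  rw [V3_comp] at this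
  exact this

lemma aeval_P {A : Type*} [CommRing A] [Algebra k A] (v : Fin 3 → A) (a b : k)
    (P : Fin 3 → MvPolynomial (Fin 3) k)
    (h : S (T (C a) (C b) (S (V3 k))) = Nf (V3 k) ^ 21 • P) :
    S (T (algebraMap k A a) (algebraMap k A b) (S v)) = Nf v ^ 21 • (fun i => aeval v (P i)) := by
  set φ := ((aeval v : MvPolynomial (Fin 3) k →ₐ[k] A) : MvPolynomial (Fin 3) k →+* A) with hφ
  have h1 := congrArg (fun w => φ ∘ w) h
  simp only [map_S, map_T] at h1
  rw [V3_comp, aeval_C', aeval_C'] at h1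
  rw [h1]
  funext i
  simp [hφ, aeval_N]

/-- Evaluating a homogeneous polynomial at a rescaled point. -/
lemma hom_aeval_smul {A : Type*} [CommRing A] [Algebra k A] {p : MvPolynomial (Fin 3) k} {n : ℕ}
    (hp : p.IsHomogeneous n) (c : A) (v : Fin 3 → A) :
    aeval (c • v) p = c ^ n * aeval v p := by
  have h2 : ∀ w : Fin 3 → A, aeval w p = ∑ d ∈ p.support,
      algebraMap k A (coeff d p) * ∏ i, w i ^ d i := by
    intro w
    rw [aeval_def, eval₂_eq']
  rw [h2, h2, Finset.mul_sum]
  refine Finset.sum_congr rfl fun d hd => ?_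
  have hdeg : d.degree = n := by
    by_contra hne
    exact (mem_support_iff.mp hd) (hp.coeff_eq_zero hne)
  have : ∏ i, (c • v) i ^ d i = c ^ n * ∏ i, v i ^ d i := by
    simp only [Pi.smul_apply, smul_eq_mul, mul_pow, Finset.prod_mul_distrib]
    rw [Finset.prod_pow_eq_pow_sum, ← hdeg, Finsupp.degree_eq_sum]
  rw [this]; ring

/-! irreducibility -/

lemma unit_or_N_dvd (h : MvPolynomial (Fin 3) k) (j : ℕ)
    (hj : Associated (aeval (S (V3 k)) h) (Nf (V3 k) ^ j)) : IsUnit h ∨ Nf (V3 k) ∣ h := by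
  set N := Nf (V3 k) with hN
  have hNp : Prime N := prime_N
  have hNh : N.IsHomogeneous 3 := by simpa using hom_N (hom_X (k := k))
  -- apply the substitution once more
  have h1 : Associated (aeval (N ^ 21 • V3 k) h) (N ^ (8 * j)) := by
    have h2 := hj.map (aeval (S (V3 k)) : MvPolynomial (Fin 3) k →ₐ[k] MvPolynomial (Fin 3) k)
    rw [map_pow, hN, aeval_N, Nf_S, ← pow_mul] at h2
    have h3 : aeval (S (V3 k)) (aeval (S (V3 k)) h) = aeval (N ^ 21 • V3 k) h := by
      rw [hN, ← S_S, ← AlgHom.comp_apply, comp_aeval]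
      congr 2
      exact (map_S ((aeval (S (V3 k)) : MvPolynomial (Fin 3) k →ₐ[k] _) :
        MvPolynomial (Fin 3) k →+* MvPolynomial (Fin 3) k) (V3 k)).trans (by rw [V3_comp])
    rwa [h3] at h2
  obtain ⟨u, hu⟩ := h1.symm
  obtain ⟨c, hc, hcu⟩ := (MvPolynomial.isUnit_iff_eq_C_of_isReduced).1 u.isUnit
  have hhom : ∀ e, homogeneousComponent (64 * e) (aeval (N ^ 21 • V3 k) h)
      = N ^ (21 * e) * homogeneousComponent e h := by
    intro e
    conv_lhs => rw [← sum_homogeneousComponent h]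
    rw [map_sum, map_sum]
    have hterm : ∀ i, homogeneousComponent (64 * e) (aeval (N ^ 21 • V3 k)
        (homogeneousComponent i h)) = if e = i then N ^ (21 * e) * homogeneousComponent e h
          else 0 := by
      intro i
      have hi := homogeneousComponent_isHomogeneous i h
      rw [hom_aeval_smul hi, aeval_X_left_apply, ← pow_mul]
      have hd : (N ^ (21 * i) * homogeneousComponent i h).IsHomogeneous (64 * i) := by
        have := (hNh.pow (21 * i)).mul hi
        rwa [show 3 * (21 * i) + i = 64 * i by ring] at this
      rw [homogeneousComponent_of_mem hd]
      by_cases hei : e = i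
      · subst hei; simp
      · rw [if_neg hei, if_neg (by omega)]
    simp only [hterm]
    rw [Finset.sum_ite_eq]
    split_ifs with hmem
    · rfl
    · rw [homogeneousComponent_eq_zero, mul_zero]
      simp at hmem; omega
  have hr : (aeval (N ^ 21 • V3 k) h).IsHomogeneous (24 * j) := by
    rw [← hu, hcu, mul_comm]
    have := (hNh.pow (8 * j)).C_mul c
    rwa [show 3 * (8 * j) = 24 * j by ring] at this
  have hne : aeval (N ^ 21 • V3 k) h ≠ 0 := by
    rw [← hu]
    exact mul_ne_zero (pow_ne_zero _ hNp.ne_zero) u.ne_zero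
  -- only one component survives
  have hzero : ∀ e, 64 * e ≠ 24 * j → homogeneousComponent e h = 0 := by
    intro e he
    have := hhom e
    rw [homogeneousComponent_of_mem hr, if_neg he] at this
    exact (mul_eq_zero.1 this.symm).resolve_left (pow_ne_zero _ hNp.ne_zero)
  have hh0 : h ≠ 0 := by rintro rfl; simp at hne
  obtain ⟨e, he⟩ : ∃ e, 64 * e = 24 * j := by
    by_contra hcon
    push Not at hcon
    apply hh0
    rw [← sum_homogeneousComponent h]
    exact Finset.sum_eq_zero fun i _ => hzero i (hcon i)
  have hhe : homogeneousComponent e h = h := by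
    conv_rhs => rw [← sum_homogeneousComponent h]
    rw [Finset.sum_eq_single e]
    · intro i _ hie
      exact hzero i (by omega)
    · intro hmem
      rw [homogeneousComponent_eq_zero]
      simp at hmem; omega
  have hfin := hhom e
  rw [hhe, homogeneousComponent_of_mem hr, if_pos he, ← hu] at hfin
  have hdvd : h ∣ N ^ (8 * j) := by
    have : h ∣ N ^ (8 * j) * u := ⟨N ^ (21 * e), by rw [hfin, mul_comm]⟩
    exact (Units.dvd_mul_right).1 this
  obtain ⟨m, _, hm⟩ := (dvd_prime_pow hNp _).1 hdvd
  rcases Nat.eq_zero_or_pos m with rfl | hpos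
  · left
    rw [pow_zero] at hm
    exact associated_one_iff_isUnit.1 hm
  · right
    exact (dvd_pow_self N (by omega)).trans hm.symm.dvd

lemma irreducible_L {a b : k} (ha : a ≠ 0) (hb : b ≠ 0) : Irreducible (L (C a) (C b) (V3 k)) := by
  have hrel : L (C a) (C b) (V3 k) = C (a ^ 2 * b ^ 2) * X 2 +
      (C (a ^ 4 - 2 * a * b ^ 3) * X 0 + C (b ^ 4 - 2 * a ^ 3 * b) * X 1) := by
    simp [L, map_ofNat (C : k →+* MvPolynomial (Fin 3) k) 2]; ring
  have hc : a ^ 2 * b ^ 2 ≠ 0 := mul_ne_zero (pow_ne_zero _ ha) (pow_ne_zero _ hb)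
  rw [hrel]
  have hu := (IsUnit.map (C : k →+* MvPolynomial (Fin 3) k) (isUnit_iff_ne_zero.2 hc))
  generalize a ^ 4 - 2 * a * b ^ 3 = c1
  generalize b ^ 4 - 2 * a ^ 3 * b = c2
  generalize a ^ 2 * b ^ 2 = c3 at hc hu
  refine irreducible_mul_X_add _ _ 2 (by simpa using hc) (by simp) ?_ ?_
  · intro h
    have := vars_add_subset _ _ h
    rw [Finset.mem_union] at this
    rcases this with h | h
    · have := vars_mul _ _ h
      simp [vars_X] at this
    · have := vars_mul _ _ h
      simp [vars_X] at this
  · exact hu.isRelPrime_left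

lemma irreducible_F {a b : k} (ha : a ≠ 0) (hb : b ≠ 0) :
    Irreducible (F (C a) (C b) (V3 k)) := by
  have key : ∀ p q : MvPolynomial (Fin 3) k, F (C a) (C b) (V3 k) = p * q → ∀ i j : ℕ,
      Associated (aeval (S (V3 k)) q) (Nf (V3 k) ^ j) → IsUnit q := by
    intro p q hpq i j hj
    rcases unit_or_N_dvd q j hj with h | h
    · exact h
    · exact absurd (hpq ▸ h.mul_left p) (not_N_dvd_F ha hb)
  have hL : Prime (L (C a) (C b) (V3 k)) := (irreducible_L ha hb).prime
  have hFS : aeval (S (V3 k)) (F (C a) (C b) (V3 k))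
      = Nf (V3 k) ^ 21 * L (C a) (C b) (V3 k) := by
    rw [aeval_F]; exact F_S _ _ _
  constructor
  · intro hu
    have h1 := hu.map (aeval (S (V3 k)) : MvPolynomial (Fin 3) k →ₐ[k] MvPolynomial (Fin 3) k)
    rw [hFS] at h1
    exact hL.not_isUnit (isUnit_of_mul_isUnit_right h1)
  · intro p q hpq
    have h1 : aeval (S (V3 k)) p * aeval (S (V3 k)) q
        = Nf (V3 k) ^ 21 * L (C a) (C b) (V3 k) := by rw [← map_mul, ← hpq, hFS]
    have h2 : L (C a) (C b) (V3 k) ∣ aeval (S (V3 k)) p * aeval (S (V3 k)) q :=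
      ⟨_, h1.trans (mul_comm _ _)⟩
    rcases hL.dvd_or_dvd h2 with h | h
    · right
      obtain ⟨r, hr⟩ := h
      have h3 : aeval (S (V3 k)) q ∣ Nf (V3 k) ^ 21 := by
        refine ⟨r, mul_left_cancel₀ hL.ne_zero ?_⟩
        rw [hr] at h1
        linear_combination -h1
      obtain ⟨m, _, hm⟩ := (dvd_prime_pow prime_N _).1 h3
      exact key p q hpq 0 m hm
    · left
      obtain ⟨r, hr⟩ := h
      have h3 : aeval (S (V3 k)) p ∣ Nf (V3 k) ^ 21 := by
        refine ⟨r, mul_left_cancel₀ hL.ne_zero ?_⟩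
        rw [hr] at h1
        linear_combination -h1
      obtain ⟨m, _, hm⟩ := (dvd_prime_pow prime_N _).1 h3
      exact key q p (by rw [hpq, mul_comm]) 0 m hm

end Poly

section Iso

variable {k : Type} [Field k]

lemma away_eq_iff {f : MvPolynomial (Fin 3) k} {d : ℕ} (hf : f ∈ homogeneousSubmodule (Fin 3) k d)
    (hf0 : f ≠ 0) (n m : ℕ) (x y : MvPolynomial (Fin 3) k)
    (hx : x ∈ homogeneousSubmodule (Fin 3) k (n • d))
    (hy : y ∈ homogeneousSubmodule (Fin 3) k (m • d)) :
    HomogeneousLocalization.Away.mk _ hf n x hx = HomogeneousLocalization.Away.mk _ hf m y hy ↔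
      x * f ^ m = y * f ^ n := by
  rw [← (HomogeneousLocalization.val_injective _).eq_iff, HomogeneousLocalization.Away.val_mk,
    HomogeneousLocalization.Away.val_mk, Localization.mk_eq_mk_iff, Localization.r_iff_exists]
  constructor
  · rintro ⟨⟨_, j, rfl⟩, h⟩
    have := mul_left_cancel₀ (pow_ne_zero j hf0) h
    simp only at this
    linear_combination this
  · intro h
    exact ⟨1, by simp only [OneMemClass.coe_one, one_mul]; linear_combination h⟩

lemma exists_away_hom {f g : MvPolynomial (Fin 3) k} (hf : f ∈ homogeneousSubmodule (Fin 3) k 8)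
    (hg : g ∈ homogeneousSubmodule (Fin 3) k 8) (P : Fin 3 → MvPolynomial (Fin 3) k)
    (hP : ∀ i, (P i).IsHomogeneous 65) (c : k) (hc : c ≠ 0)
    (hPg : aeval P g = C c * f ^ 65) :
    ∃ φ : AwayRing k g →ₐ[k] AwayRing k f, ∀ n x hx, ∃ m y hy,
      φ (HomogeneousLocalization.Away.mk _ hg n x hx)
        = HomogeneousLocalization.Away.mk _ hf m y hy ∧ y * aeval P g ^ n = aeval P x * f ^ m := by
  classical
  let ι := algebraMap (MvPolynomial (Fin 3) k) (Localization.Away f)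
  let θ : MvPolynomial (Fin 3) k →+* Localization.Away f :=
    ι.comp ((aeval P : MvPolynomial (Fin 3) k →ₐ[k] MvPolynomial (Fin 3) k) :
      MvPolynomial (Fin 3) k →+* MvPolynomial (Fin 3) k)
  let v : Localization.Away f := Localization.mk (C c⁻¹) ⟨f ^ 65, 65, rfl⟩
  have hv : θ g * v = 1 := by
    change ι (aeval P g) * v = 1
    rw [hPg]
    change algebraMap _ _ _ * _ = _
    rw [← Localization.mk_one_eq_algebraMap, Localization.mk_mul, ← Localization.mk_one,
      Localization.mk_eq_mk_iff, Localization.r_iff_exists]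
    refine ⟨1, ?_⟩
    have : (C c : MvPolynomial (Fin 3) k) * C c⁻¹ = 1 := by rw [← C_mul, mul_inv_cancel₀ hc, C_1]
    simp only [OneMemClass.coe_one, one_mul, mul_one]
    linear_combination f ^ 65 * this
  let Φ := Localization.awayLift θ g (isUnit_iff_exists_inv.mpr ⟨v, hv⟩)
  have hΦ : ∀ x n, Φ (Localization.mk x ⟨g ^ n, n, rfl⟩) = θ x * v ^ n :=
    fun x n => Localization.awayLift_mk θ g x v hv n
  have hmem : ∀ (n : ℕ) (x : MvPolynomial (Fin 3) k) (_ : x ∈ homogeneousSubmodule (Fin 3) k (n • 8)),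
      C (c⁻¹ ^ n) * aeval P x ∈ homogeneousSubmodule (Fin 3) k ((65 * n) • 8) := by
    intro n x hx
    have h1 := (IsHomogeneous.aeval hx P hP).C_mul (c⁻¹ ^ n)
    rw [show 65 * (n • 8) = (65 * n) • 8 by simp; ring] at h1
    exact h1
  have hval : ∀ n x hx, Φ (HomogeneousLocalization.Away.mk (homogeneousSubmodule (Fin 3) k) hg n x hx).val
      = (HomogeneousLocalization.Away.mk (homogeneousSubmodule (Fin 3) k) hf (65 * n)
        (C (c⁻¹ ^ n) * aeval P x) (hmem n x hx)).val := by
    intro n x hx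
    rw [HomogeneousLocalization.Away.val_mk, HomogeneousLocalization.Away.val_mk, hΦ]
    change algebraMap (MvPolynomial (Fin 3) k) (Localization.Away f) (aeval P x) * _ = _
    rw [← Localization.mk_one_eq_algebraMap, Localization.mk_pow, Localization.mk_mul,
      Localization.mk_eq_mk_iff, Localization.r_iff_exists]
    refine ⟨1, ?_⟩
    simp only [OneMemClass.coe_one, one_mul, SubmonoidClass.coe_pow, map_pow]
    ring
  have hex : ∀ z : AwayRing k g, ∃ w : AwayRing k f, w.val = Φ z.val := by
    intro z
    obtain ⟨n, x, hx, rfl⟩ := HomogeneousLocalization.Away.mk_surjective _ hg z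
    exact ⟨_, (hval n x hx).symm⟩
  choose φ hφ using hex
  let φr : AwayRing k g →+* AwayRing k f :=
    { toFun := φ
      map_one' := HomogeneousLocalization.val_injective _ (by
        rw [hφ, HomogeneousLocalization.val_one, HomogeneousLocalization.val_one, map_one])
      map_zero' := HomogeneousLocalization.val_injective _ (by
        rw [hφ, HomogeneousLocalization.val_zero, HomogeneousLocalization.val_zero, map_zero])
      map_mul' := fun x y => HomogeneousLocalization.val_injective _ (by
        rw [hφ, HomogeneousLocalization.val_mul, HomogeneousLocalization.val_mul, map_mul, hφ, hφ])
      map_add' := fun x y => HomogeneousLocalization.val_injective _ (by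
        rw [hφ, HomogeneousLocalization.val_add, HomogeneousLocalization.val_add, map_add,
          hφ, hφ]) }
  refine ⟨{ φr with commutes' := ?_ }, ?_⟩
  · intro r
    have h1 : ∀ h : MvPolynomial (Fin 3) k, (algebraMap k (AwayRing k h) r).val
        = algebraMap (MvPolynomial (Fin 3) k) (Localization.Away h) (C r) := by
      intro h
      rw [← Localization.mk_one_eq_algebraMap]
      rfl
    apply HomogeneousLocalization.val_injective
    change (φ _).val = _
    rw [hφ, h1, h1]
    refine (IsLocalization.Away.lift_eq g _ (C r)).trans ?_
    change ι (aeval P (C r)) = _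
    rw [algHom_C]
    rfl
  · intro n x hx
    refine ⟨65 * n, _, hmem n x hx, ?_, ?_⟩
    · apply HomogeneousLocalization.val_injective
      rw [← hval]
      exact hφ _
    · rw [hPg]
      have : (C c : MvPolynomial (Fin 3) k) ^ n * C (c⁻¹ ^ n) = 1 := by
        rw [← C_pow, ← C_mul, ← mul_pow, mul_inv_cancel₀ hc, one_pow, C_1]
      linear_combination aeval P x * f ^ (65 * n) * this

lemma away_left_inverse {f g : MvPolynomial (Fin 3) k} (hf : f ∈ homogeneousSubmodule (Fin 3) k 8)
    (hg : g ∈ homogeneousSubmodule (Fin 3) k 8) (hg0 : g ≠ 0) (P P' : Fin 3 → MvPolynomial (Fin 3) k)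
    (s : MvPolynomial (Fin 3) k) (hs : s ≠ 0)
    (hPP : ∀ i, aeval P' (P i) = s * X i) (hP0 : aeval P' f ≠ 0)
    (φ : AwayRing k g →ₐ[k] AwayRing k f) (ψ : AwayRing k f →ₐ[k] AwayRing k g)
    (hφ : ∀ n x hx, ∃ m y hy,
      φ (HomogeneousLocalization.Away.mk _ hg n x hx)
        = HomogeneousLocalization.Away.mk _ hf m y hy ∧ y * aeval P g ^ n = aeval P x * f ^ m)
    (hψ : ∀ n x hx, ∃ m y hy,
      ψ (HomogeneousLocalization.Away.mk _ hf n x hx)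
        = HomogeneousLocalization.Away.mk _ hg m y hy ∧
          y * aeval P' f ^ n = aeval P' x * g ^ m) (z : AwayRing k g) : ψ (φ z) = z := by
  obtain ⟨n, x, hx, rfl⟩ := HomogeneousLocalization.Away.mk_surjective _ hg z
  obtain ⟨m, y, hy, h1, h2⟩ := hφ n x hx
  obtain ⟨l, w, hw, h3, h4⟩ := hψ m y hy
  rw [h1, h3, away_eq_iff hg hg0]
  have hcomp : ∀ (p : MvPolynomial (Fin 3) k) (d : ℕ), p.IsHomogeneous d →
      aeval P' (aeval P p) = s ^ d * p := by
    intro p d hp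
    rw [← AlgHom.comp_apply, comp_aeval]
    have : (fun i => aeval P' (P i)) = s • (X : Fin 3 → MvPolynomial (Fin 3) k) := by
      funext i; exact hPP i
    rw [this, hom_aeval_smul hp, aeval_X_left_apply]
  have h5 := congrArg (aeval P') h2
  rw [map_mul, map_pow, hcomp g 8 hg, map_mul, map_pow, hcomp x _ hx] at h5
  have h6 : aeval P' y * g ^ n = x * aeval P' f ^ m := by
    apply mul_left_cancel₀ (pow_ne_zero (n • 8) hs)
    rw [smul_eq_mul, mul_comm n 8, pow_mul] at h5 ⊢
    rw [mul_pow] at h5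
    linear_combination h5
  apply mul_left_cancel₀ (pow_ne_zero m hP0)
  linear_combination g ^ n * h4 + g ^ l * h6

lemma away_iso {a b : k} (ha : a ≠ 0) (hb : b ≠ 0) :
    Nonempty (AwayRing k (F (C a) (C b) (V3 k)) ≃ₐ[k] AwayRing k (F (C b) (C a) (V3 k))) := by
  obtain ⟨P, hPh, hP⟩ := exists_P_poly a b ha hb
  obtain ⟨P', hPh', hP'⟩ := exists_P_poly b a hb ha
  have hN : Nf (V3 k) ≠ 0 := prime_N.ne_zero
  have ha' : (C a : MvPolynomial (Fin 3) k) ≠ 0 := by simpa using ha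
  have hb' : (C b : MvPolynomial (Fin 3) k) ≠ 0 := by simpa using hb
  have hf : F (C a) (C b) (V3 k) ∈ homogeneousSubmodule (Fin 3) k 8 := hom_F a b
  have hg : F (C b) (C a) (V3 k) ∈ homogeneousSubmodule (Fin 3) k 8 := hom_F b a
  have hf0 := F_ne_zero ha hb
  have hg0 := F_ne_zero hb ha
  have e1 : aeval P (F (C b) (C a) (V3 k)) = C ((a * b) ^ 64) * F (C a) (C b) (V3 k) ^ 65 := by
    rw [aeval_F]
    refine (F_P (C a) (C b) (V3 k) P hN hP).trans ?_
    simp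
  have e2 : aeval P' (F (C a) (C b) (V3 k)) = C ((b * a) ^ 64) * F (C b) (C a) (V3 k) ^ 65 := by
    rw [aeval_F]
    refine (F_P (C b) (C a) (V3 k) P' hN hP').trans ?_
    simp
  have e3 := P_P (C a) (C b) (V3 k) P (fun i => aeval P (P' i)) hN ha' hb' hf0 hP
    (aeval_P P b a P' hP')
  have e4 := P_P (C b) (C a) (V3 k) P' (fun i => aeval P' (P i)) hN hb' ha' hg0 hP'
    (aeval_P P' a b P hP)
  have hab : (a * b) ^ 64 ≠ 0 := pow_ne_zero _ (mul_ne_zero ha hb)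
  have hba : (b * a) ^ 64 ≠ 0 := pow_ne_zero _ (mul_ne_zero hb ha)
  obtain ⟨φ, hφ⟩ := exists_away_hom hf hg P hPh _ hab e1
  obtain ⟨ψ, hψ⟩ := exists_away_hom hg hf P' hPh' _ hba e2
  have c1 : (C ((a * b) ^ 64) : MvPolynomial (Fin 3) k) ≠ 0 := C_ne_zero.2 hab
  have c2 : (C ((b * a) ^ 64) : MvPolynomial (Fin 3) k) ≠ 0 := C_ne_zero.2 hba
  refine ⟨AlgEquiv.ofAlgHom ψ φ ?_ ?_⟩
  · ext1 z
    refine away_left_inverse hf hg hg0 P P' _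
      (mul_ne_zero (pow_ne_zero 528 (mul_ne_zero hb' ha')) (pow_ne_zero 528 hg0))
      (fun i => congrFun e4 i) ?_ φ ψ hφ hψ z
    rw [e2]
    exact mul_ne_zero c2 (pow_ne_zero _ hg0)
  · ext1 z
    refine away_left_inverse hg hf hf0 P' P _
      (mul_ne_zero (pow_ne_zero 528 (mul_ne_zero ha' hb')) (pow_ne_zero 528 hf0))
      (fun i => congrFun e3 i) ?_ ψ φ hψ hφ z
    rw [e1]
    exact mul_ne_zero c1 (pow_ne_zero _ hf0)

end Iso

section NonEquiv

lemma y2_F {R : Type*} [CommRing R] (a b : R) (v : Fin 3 → R) : v 1 ^ 2 * F a b v =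
    (a ^ 4 - 2 * a * b ^ 3) * v 1 * Nf v * (Nf v ^ 2 + Qf v ^ 3)
    + (b ^ 4 - 2 * a ^ 3 * b) * v 1 ^ 2 * Qf v * Nf v ^ 2
    + a ^ 2 * b ^ 2 * (Qf v ^ 5 + 2 * Qf v ^ 2 * Nf v ^ 2 + v 0 * Nf v ^ 3) := by
  have h1 := y_Wf v
  have h2 := y_Bf v
  have h3 : F a b v = (a ^ 4 - 2 * a * b ^ 3) * (Nf v * Wf v)
    + (b ^ 4 - 2 * a ^ 3 * b) * (Nf v ^ 2 * Qf v)
    + a ^ 2 * b ^ 2 * (Bf v * Wf v - v 1 * Qf v ^ 2 * Nf v) := rfl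
  have h4 : Nf v = v 0 * Qf v - v 1 ^ 3 := rfl
  rw [h3]
  have h5 : v 1 ^ 2 * (Bf v * Wf v) = (Nf v ^ 2 + Qf v ^ 3) * (Qf v ^ 2 + v 0 * Nf v) := by
    rw [← h1, ← h2]; ring
  linear_combination (a ^ 4 - 2 * a * b ^ 3) * v 1 * Nf v * h1 + a ^ 2 * b ^ 2 * h5
    - a ^ 2 * b ^ 2 * Qf v ^ 2 * Nf v * h4

variable {k : Type} [Field k]

lemma equiv_eval {a b c : k} {M : Matrix (Fin 3) (Fin 3) k}
    (h : aeval (fun i => ∑ j, C (M i j) * X j) (F (C a) (C b) (V3 k)) = c • F (C b) (C a) (V3 k))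
    {A : Type} [CommRing A] [Algebra k A] (u : Fin 3 → A) :
    F (algebraMap k A a) (algebraMap k A b) (fun i => ∑ j, algebraMap k A (M i j) * u j)
      = algebraMap k A c * F (algebraMap k A b) (algebraMap k A a) u := by
  have h1 := congrArg (aeval u) h
  rw [← AlgHom.comp_apply, comp_aeval, aeval_F, map_smul, aeval_F, Algebra.smul_def] at h1
  rw [← h1]
  congr 1
  funext i
  simp

/-- The curve is singular at the node. -/
lemma F_node (a b : k) (w : Fin 3 → DualNumber k) (h0 : (w 0).fst = 0) (h1 : (w 1).fst = 0) :
    F (algebraMap k _ a) (algebraMap k _ b) w = 0 := by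
  have e : ∀ x y : DualNumber k, x.fst = 0 → y.fst = 0 → x * y = 0 := by
    intro x y hx hy
    ext <;> simp [hx, hy]
  have e00 := e _ _ h0 h0
  have e01 := e _ _ h0 h1
  have e11 := e _ _ h1 h1
  have hQ : Qf w = w 1 * w 2 := by
    rw [Qf]; linear_combination -e00
  have hN : Nf w = 0 := by
    rw [Nf, hQ]; linear_combination w 2 * e01 - w 1 * e11
  have hB : Bf w = w 2 * Qf w := by
    rw [Bf]; linear_combination -w 1 * e01
  have hW : Wf w = 0 := by
    rw [Wf, hN, hB, hQ]; linear_combination w 2 ^ 3 * e11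
  have hZ : Zf w = 0 := by rw [Zf, hW, hN]; ring
  simp [F, L, hN, hZ]

/-- A singular point of the octic is the node. -/
lemma sing_point {a b : k} (ha : a ≠ 0) (hb : b ≠ 0) (p : Fin 3 → k)
    (H : ∀ w : Fin 3 → DualNumber k, (∀ i, (w i).fst = p i) →
      F (algebraMap k _ a) (algebraMap k _ b) w = 0) : p 0 = 0 ∧ p 1 = 0 := by
  have hc : a ^ 2 * b ^ 2 ≠ 0 := mul_ne_zero (pow_ne_zero _ ha) (pow_ne_zero _ hb)
  by_cases hN : Nf p = 0
  · have h1 := H (fun i => algebraMap k _ (p i)) (fun i => rfl)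
    have h2 : F a b p = 0 := by
      have h3 := map_F (algebraMap k (DualNumber k)) a b p
      have h4 : algebraMap k (DualNumber k) (F a b p) = 0 := h3.trans h1
      have h5 := congrArg TrivSqZeroExt.fst h4
      exact h5
    have h3 := y2_F a b p
    rw [h2, hN] at h3
    have h4 : a ^ 2 * b ^ 2 * Qf p ^ 5 = 0 := by linear_combination -h3
    have hQ : Qf p = 0 := by
      rcases mul_eq_zero.1 h4 with h | h
      · exact absurd h hc
      · exact pow_eq_zero_iff (by norm_num) |>.1 h
    rw [Nf, hQ] at hN
    have hy : p 1 = 0 := by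
      have : p 1 ^ 3 = 0 := by linear_combination -hN
      exact pow_eq_zero_iff (by norm_num) |>.1 this
    rw [Qf, hy] at hQ
    have hx : p 0 ^ 2 = 0 := by linear_combination -hQ
    exact ⟨pow_eq_zero_iff (by norm_num) |>.1 hx, hy⟩
  · exfalso
    let φ : DualNumber k →+* k := (TrivSqZeroExt.fstHom k k k).toRingHom
    have hφ : ∀ u, φ u = u.fst := fun u => rfl
    let u : Fin 3 → DualNumber k := fun i => algebraMap k _ (S p i) + if i = 2 then DualNumber.eps
      else 0
    have hu : φ ∘ u = S p := by
      funext i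
      fin_cases i <;> simp [u, φ, TrivSqZeroExt.algebraMap_eq_inl]
    have hSu : φ ∘ S u = Nf p ^ 21 • p := by rw [map_S, hu, S_S]
    have hNu : φ (Nf u) = Nf p ^ 8 := by rw [map_Nf, hu, Nf_S]
    set s : DualNumber k := algebraMap k _ (Nf p ^ 21) with hs
    set s' : DualNumber k := algebraMap k _ ((Nf p ^ 21)⁻¹) with hs'
    have hn : Nf p ^ 21 ≠ 0 := pow_ne_zero _ hN
    have hss : s * s' = 1 := by rw [hs, hs', ← map_mul, mul_inv_cancel₀ hn, map_one]
    have e1 : F (algebraMap k _ a) (algebraMap k _ b) (s' • S u) = 0 := by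
      apply H
      intro i
      rw [← hφ]
      have := congrFun hSu i
      simp only [Function.comp, Pi.smul_apply, smul_eq_mul] at this
      rw [Pi.smul_apply, smul_eq_mul, map_mul, this]
      have : φ s' = (Nf p ^ 21)⁻¹ := rfl
      rw [this, ← mul_assoc, inv_mul_cancel₀ hn, one_mul]
    rw [F_smul, F_S] at e1
    have hNunit : IsUnit (Nf u) := by
      rw [TrivSqZeroExt.isUnit_iff_isUnit_fst, ← hφ, hNu]
      exact isUnit_iff_ne_zero.2 (pow_ne_zero _ hN)
    have hs'unit : IsUnit s' := IsUnit.of_mul_eq_one s (by rw [mul_comm, hss])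
    have e2 : L (algebraMap k (DualNumber k) a) (algebraMap k _ b) u = 0 := by
      rw [(hs'unit.pow 8).mul_right_eq_zero, (hNunit.pow 21).mul_right_eq_zero] at e1
      exact e1
    have e3 : L (algebraMap k (DualNumber k) a) (algebraMap k _ b) u
        = algebraMap k _ (L a b (S p)) + algebraMap k _ (a ^ 2 * b ^ 2) * DualNumber.eps := by
      rw [map_L]
      simp [L, u]
      ring
    rw [e3] at e2
    have e4 := congrArg TrivSqZeroExt.snd e2
    apply hc
    simpa [TrivSqZeroExt.algebraMap_eq_inl] using e4

lemma cancel_eval {p : Polynomial k} (n : ℕ)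
    (h : (Polynomial.X : Polynomial k) ^ n * p = 0) : Polynomial.eval 0 p = 0 := by
  have h1 := (mul_eq_zero.1 h).resolve_left (pow_ne_zero _ Polynomial.X_ne_zero)
  rw [h1, Polynomial.eval_zero]

/-- Rigidity of the branches at the node. -/
lemma arc_rigid {a b κ m00 m01 m10 m11 m20 m21 m : k} (ha : a ≠ 0) (hb : b ≠ 0)
    (hdet : m * (m00 * m11 - m01 * m10) ≠ 0) (v : Fin 3 → Polynomial k)
    (hx : v 0 = Polynomial.C m00 * Polynomial.X + Polynomial.C m01 * Polynomial.X ^ 2)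
    (hy : v 1 = Polynomial.C m10 * Polynomial.X + Polynomial.C m11 * Polynomial.X ^ 2)
    (hz : v 2 = Polynomial.C m20 * Polynomial.X + Polynomial.C m21 * Polynomial.X ^ 2
      + Polynomial.C m * (1 + Polynomial.X ^ 3))
    (hF : F (Polynomial.C a) (Polynomial.C b) v = Polynomial.C κ * Polynomial.X ^ 21) :
    m10 = 0 ∧ m01 = 0 ∧ m20 = 0 ∧ m21 = 0 ∧ m11 * m = m00 ^ 2 ∧ m00 * m = m11 ^ 2 := by
  have hE := y2_F (Polynomial.C a) (Polynomial.C b) v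
  rw [hF] at hE
  have hN : Nf v = v 0 * Qf v - v 1 ^ 3 := rfl
  have hQ : Qf v = v 1 * v 2 - v 0 ^ 2 := rfl
  rw [hN] at hE
  have hγ : a ^ 2 * b ^ 2 ≠ 0 := mul_ne_zero (pow_ne_zero _ ha) (pow_ne_zero _ hb)
  have hα' : Polynomial.C a ^ 4 - 2 * Polynomial.C a * Polynomial.C b ^ 3
      = Polynomial.C (a ^ 4 - 2 * a * b ^ 3) := by
    simp [map_ofNat (Polynomial.C : k →+* Polynomial k) 2]
  have hβ' : Polynomial.C b ^ 4 - 2 * Polynomial.C a ^ 3 * Polynomial.C b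
      = Polynomial.C (b ^ 4 - 2 * a ^ 3 * b) := by
    simp [map_ofNat (Polynomial.C : k →+* Polynomial k) 2]
  have hγ' : Polynomial.C a ^ 2 * Polynomial.C b ^ 2 = Polynomial.C (a ^ 2 * b ^ 2) := by simp
  rw [hα', hβ', hγ'] at hE
  clear hα' hβ' hγ' hF
  generalize a ^ 4 - 2 * a * b ^ 3 = α at hE
  generalize b ^ 4 - 2 * a ^ 3 * b = β at hE
  generalize a ^ 2 * b ^ 2 = γ at hE hγ
  generalize Qf v = Q at hE hQ hN
  have hm : m ≠ 0 := left_ne_zero_of_mul hdet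
  set t : Polynomial k := Polynomial.X with ht
  -- first step
  have h10 : m10 = 0 := by
    obtain ⟨x1, hx1⟩ : ∃ x1, x1 = Polynomial.C m00 + Polynomial.C m01 * t := ⟨_, rfl⟩
    obtain ⟨y1, hy1⟩ : ∃ y1, y1 = Polynomial.C m10 + Polynomial.C m11 * t := ⟨_, rfl⟩
    obtain ⟨q, hq⟩ : ∃ q, q = y1 * v 2 - t * x1 ^ 2 := ⟨_, rfl⟩
    obtain ⟨n, hn⟩ : ∃ n, n = x1 * q - t * y1 ^ 3 := ⟨_, rfl⟩
    have e0 : v 0 = t * x1 := by rw [hx, hx1]; ring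
    have e1 : v 1 = t * y1 := by rw [hy, hy1]; ring
    have eQ : Q = t * q := by rw [hQ, e0, e1, hq]; ring
    have eN : v 0 * Q - v 1 ^ 3 = t ^ 2 * n := by rw [e0, e1, eQ, hn]; ring
    rw [eN, e0, e1, eQ] at hE
    have h := cancel_eval (p := Polynomial.C γ * q ^ 5
      + t * (Polynomial.C α * y1 * n * (t * n ^ 2 + q ^ 3)
        + Polynomial.C β * t * y1 ^ 2 * q * n ^ 2
        + Polynomial.C γ * (2 * q ^ 2 * n ^ 2 + t * x1 * n ^ 3)
        - Polynomial.C κ * y1 ^ 2 * t ^ 17)) 5 (by linear_combination -hE)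
    simp [ht, hq, hy1, hz, hγ, hm] at h
    exact h
  subst h10
  have h11 : m11 ≠ 0 := by rintro rfl; simp at hdet
  have h00 : m00 ≠ 0 := by rintro rfl; simp at hdet
  obtain ⟨x1, hx1⟩ : ∃ x1, x1 = Polynomial.C m00 + Polynomial.C m01 * t := ⟨_, rfl⟩
  have e0 : v 0 = t * x1 := by rw [hx, hx1]; ring
  have e1 : v 1 = t ^ 2 * Polynomial.C m11 := by rw [hy, Polynomial.C_0]; ring
  -- second step
  obtain ⟨q, hq⟩ : ∃ q, q = Polynomial.C m11 * v 2 - x1 ^ 2 := ⟨_, rfl⟩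
  have eQ : Q = t ^ 2 * q := by rw [hQ, e0, e1, hq]; ring
  have hmm : m11 * m = m00 ^ 2 := by
    obtain ⟨n, hn⟩ : ∃ n, n = x1 * q - t ^ 3 * Polynomial.C m11 ^ 3 := ⟨_, rfl⟩
    have eN : v 0 * Q - v 1 ^ 3 = t ^ 3 * n := by rw [e0, e1, eQ, hn]; ring
    rw [eN, e0, e1, eQ] at hE
    have h := cancel_eval (p := Polynomial.C γ * (q ^ 5 + 2 * q ^ 2 * n ^ 2 + x1 * n ^ 3)
      + t * (Polynomial.C α * Polynomial.C m11 * n * (n ^ 2 + q ^ 3)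
        + Polynomial.C β * Polynomial.C m11 ^ 2 * t * q * n ^ 2
        - Polynomial.C κ * Polynomial.C m11 ^ 2 * t ^ 14)) 10 (by linear_combination -hE)
    simp [ht, hn, hq, hx1, hz, hγ] at h
    have h2 : (m11 * m - m00 ^ 2) ^ 3 * (m11 * m) ^ 2 = 0 := by linear_combination h
    have h3 := (mul_eq_zero.1 h2).resolve_right (pow_ne_zero _ (mul_ne_zero h11 hm))
    exact sub_eq_zero.1 (pow_eq_zero_iff (by norm_num) |>.1 h3)
  have hmm' : Polynomial.C m11 * Polynomial.C m = Polynomial.C m00 ^ 2 := by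
    rw [← Polynomial.C_mul, hmm, Polynomial.C_pow]
  have hcube : ∀ e : k, γ * (m00 * (m00 * e) ^ 3) = 0 → e = 0 := by
    intro e he
    have h1 := (mul_eq_zero.1 he).resolve_left hγ
    have h2 := (mul_eq_zero.1 h1).resolve_left h00
    exact (mul_eq_zero.1 (pow_eq_zero_iff (by norm_num) |>.1 h2)).resolve_left h00
  -- third step
  obtain ⟨q', hq'⟩ : ∃ q', q' = Polynomial.C (m11 * m20 - 2 * m00 * m01)
    + Polynomial.C (m11 * m21 - m01 ^ 2) * t + Polynomial.C (m11 * m) * t ^ 2 := ⟨_, rfl⟩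
  have eq' : Q = t ^ 3 * q' := by
    rw [eQ, hq, hz, hx1, hq']
    simp only [Polynomial.C_mul, Polynomial.C_sub, Polynomial.C_pow,
      map_ofNat (Polynomial.C : k →+* Polynomial k) 2]
    linear_combination t ^ 2 * hmm'
  have h3 : m11 * m20 - 2 * m00 * m01 = 0 := by
    obtain ⟨n, hn⟩ : ∃ n, n = x1 * q' - t ^ 2 * Polynomial.C m11 ^ 3 := ⟨_, rfl⟩
    have eN : v 0 * Q - v 1 ^ 3 = t ^ 4 * n := by rw [e0, e1, eq', hn]; ring
    rw [eN, e0, e1, eq'] at hE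
    have h := cancel_eval (p := Polynomial.C γ * (x1 * n ^ 3)
      + t * (Polynomial.C α * Polynomial.C m11 * n * (n ^ 2 + t * q' ^ 3)
        + Polynomial.C β * Polynomial.C m11 ^ 2 * t * q' * n ^ 2
        + Polynomial.C γ * (t * q' ^ 5 + 2 * q' ^ 2 * n ^ 2)
        - Polynomial.C κ * Polynomial.C m11 ^ 2 * t ^ 11)) 13 (by linear_combination -hE)
    apply hcube
    simp only [ht, hn, hq', hx1, Polynomial.eval_add, Polynomial.eval_mul, Polynomial.eval_sub,
      Polynomial.eval_pow, Polynomial.eval_C, Polynomial.eval_X] at h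
    linear_combination h
  rw [h3] at hq'
  -- fourth step
  obtain ⟨q2, hq2⟩ : ∃ q2, q2 = Polynomial.C (m11 * m21 - m01 ^ 2)
    + Polynomial.C (m11 * m) * t := ⟨_, rfl⟩
  have eq2 : Q = t ^ 4 * q2 := by
    rw [eq', hq', hq2, Polynomial.C_0]; ring
  have h4 : m11 * m21 - m01 ^ 2 = 0 := by
    obtain ⟨n, hn⟩ : ∃ n, n = x1 * q2 - t * Polynomial.C m11 ^ 3 := ⟨_, rfl⟩
    have eN : v 0 * Q - v 1 ^ 3 = t ^ 5 * n := by rw [e0, e1, eq2, hn]; ring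
    rw [eN, e0, e1, eq2] at hE
    have h := cancel_eval (p := Polynomial.C γ * (x1 * n ^ 3)
      + t * (Polynomial.C α * Polynomial.C m11 * n * (n ^ 2 + t ^ 2 * q2 ^ 3)
        + Polynomial.C β * Polynomial.C m11 ^ 2 * t * q2 * n ^ 2
        + Polynomial.C γ * (t ^ 3 * q2 ^ 5 + 2 * t * q2 ^ 2 * n ^ 2)
        - Polynomial.C κ * Polynomial.C m11 ^ 2 * t ^ 8)) 16 (by linear_combination -hE)
    apply hcube
    simp only [ht, hn, hq2, hx1, Polynomial.eval_add, Polynomial.eval_mul, Polynomial.eval_sub,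
      Polynomial.eval_pow, Polynomial.eval_C, Polynomial.eval_X] at h
    linear_combination h
  rw [h4] at hq2
  -- fifth step
  obtain ⟨q3, hq3⟩ : ∃ q3, q3 = Polynomial.C (m11 * m) := ⟨_, rfl⟩
  have eq3 : Q = t ^ 5 * q3 := by
    rw [eq2, hq2, hq3, Polynomial.C_0]; ring
  have h5 : m00 * (m11 * m) - m11 ^ 3 = 0 := by
    obtain ⟨n, hn⟩ : ∃ n, n = x1 * q3 - Polynomial.C m11 ^ 3 := ⟨_, rfl⟩
    have eN : v 0 * Q - v 1 ^ 3 = t ^ 6 * n := by rw [e0, e1, eq3, hn]; ring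
    rw [eN, e0, e1, eq3] at hE
    have h := cancel_eval (p := Polynomial.C γ * (x1 * n ^ 3)
      + t * (Polynomial.C α * Polynomial.C m11 * n * (n ^ 2 + t ^ 3 * q3 ^ 3)
        + Polynomial.C β * Polynomial.C m11 ^ 2 * t * q3 * n ^ 2
        + Polynomial.C γ * (t ^ 5 * q3 ^ 5 + 2 * t ^ 2 * q3 ^ 2 * n ^ 2)
        - Polynomial.C κ * Polynomial.C m11 ^ 2 * t ^ 5)) 19 (by linear_combination -hE)
    simp only [ht, hn, hq3, hx1, Polynomial.eval_add, Polynomial.eval_mul, Polynomial.eval_sub,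
      Polynomial.eval_pow, Polynomial.eval_C, Polynomial.eval_X] at h
    have h2 : γ * (m00 * (m00 * (m11 * m) - m11 ^ 3) ^ 3) = 0 := by linear_combination h
    have h3 := (mul_eq_zero.1 ((mul_eq_zero.1 h2).resolve_left hγ)).resolve_left h00
    exact pow_eq_zero_iff (by norm_num) |>.1 h3
  -- sixth step
  have h5' : Polynomial.C m00 * q3 = Polynomial.C m11 ^ 3 := by
    rw [hq3, ← Polynomial.C_mul, ← Polynomial.C_pow, sub_eq_zero.1 h5]
  have h01 : m01 = 0 := by
    obtain ⟨n, hn⟩ : ∃ n, n = Polynomial.C m01 * q3 := ⟨_, rfl⟩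
    have eN : v 0 * Q - v 1 ^ 3 = t ^ 7 * n := by
      rw [e0, e1, eq3, hn, hx1]; linear_combination t ^ 6 * h5'
    rw [eN, e0, e1, eq3] at hE
    have h := cancel_eval (p := Polynomial.C γ * (x1 * n ^ 3)
      + t * (Polynomial.C α * Polynomial.C m11 * n * (n ^ 2 + t * q3 ^ 3)
        + Polynomial.C β * Polynomial.C m11 ^ 2 * q3 * n ^ 2
        + Polynomial.C γ * (t ^ 2 * q3 ^ 5 + 2 * t * q3 ^ 2 * n ^ 2)
        - Polynomial.C κ * Polynomial.C m11 ^ 2 * t ^ 2)) 22 (by linear_combination -hE)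
    simp [ht, hn, hq3, hx1, hγ, h00, h11, hm] at h
    exact h
  subst h01
  refine ⟨rfl, rfl, ?_, ?_, hmm, ?_⟩
  · have : m11 * m20 = 0 := by linear_combination h3
    exact (mul_eq_zero.1 this).resolve_left h11
  · have : m11 * m21 = 0 := by linear_combination h4
    exact (mul_eq_zero.1 this).resolve_left h11
  · apply mul_left_cancel₀ h11
    linear_combination h5

lemma F_line {R : Type*} [CommRing R] (a b : R) (v : Fin 3 → R) (h : v 1 = 0) :
    F a b v = -v 0 ^ 6 * ((a ^ 4 - 2 * a * b ^ 3) * (v 0 * v 2)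
      + (b ^ 4 - 2 * a ^ 3 * b) * v 0 ^ 2 + a ^ 2 * b ^ 2 * v 2 ^ 2) := by
  have hQ : Qf v = -v 0 ^ 2 := by rw [Qf, h]; ring
  have hN : Nf v = -v 0 ^ 3 := by rw [Nf, hQ, h]; ring
  have hB : Bf v = -v 0 ^ 2 * v 2 := by rw [Bf, hQ, h]; ring
  have hW : Wf v = v 0 ^ 4 * v 2 := by rw [Wf, hQ, hB, h]; ring
  simp only [F, L, S_zero, S_one, S_two, Zf, hQ, hN, hB, hW, h]
  ring

lemma not_projEquiv {a b : k} (ha : a ≠ 0) (hb : b ≠ 0)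
    (hab : (a ^ 4 - 2 * a * b ^ 3) ^ 3 ≠ (b ^ 4 - 2 * a ^ 3 * b) ^ 3) :
    ¬ ProjEquiv (F (C a) (C b) (V3 k)) (F (C b) (C a) (V3 k)) := by
  rintro ⟨M, hM, c, h⟩
  have hγ : a ^ 2 * b ^ 2 ≠ 0 := mul_ne_zero (pow_ne_zero _ ha) (pow_ne_zero _ hb)
  obtain ⟨h02, h12⟩ : M 0 2 = 0 ∧ M 1 2 = 0 := by
    refine sing_point ha hb (fun i => M i 2) fun w hw => ?_
    have hw0 : (fun i => (w i).fst) = M.mulVec (Pi.single 2 1) := by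
      funext i; simp [hw]
    let u : Fin 3 → DualNumber k := fun i => ∑ j, algebraMap k _ (M⁻¹ i j) * w j
    have h1 := equiv_eval h u
    have h2 : (fun i => ∑ j, algebraMap k (DualNumber k) (M i j) * u j) = w := by
      funext i
      simp only [u, Finset.mul_sum]
      rw [Finset.sum_comm]
      have h3 : ∀ j, ∑ l, algebraMap k (DualNumber k) (M i l)
          * (algebraMap k (DualNumber k) (M⁻¹ l j) * w j)
          = algebraMap k (DualNumber k) ((1 : Matrix (Fin 3) (Fin 3) k) i j) * w j := by
        intro j
        rw [← Matrix.mul_nonsing_inv M hM, Matrix.mul_apply, map_sum, Finset.sum_mul]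
        simp only [map_mul, mul_assoc]
      simp only [h3, Matrix.one_apply]
      simp
    rw [h2] at h1
    rw [h1, F_node, mul_zero]
    all_goals
      have h3 : ∀ i, (u i).fst = (Pi.single 2 1 : Fin 3 → k) i := by
        intro i
        have h4 : (u i).fst = M⁻¹.mulVec (fun i => (w i).fst) i := by
          simp [u, Matrix.mulVec, dotProduct, TrivSqZeroExt.fst_sum,
            TrivSqZeroExt.algebraMap_eq_inl]
        rw [h4, hw0, Matrix.mulVec_mulVec, Matrix.nonsing_inv_mul M hM, Matrix.one_mulVec]
      rw [h3]
      simp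
  have hdet : M 2 2 * (M 0 0 * M 1 1 - M 0 1 * M 1 0) ≠ 0 := by
    have h1 := hM.ne_zero
    rw [Matrix.det_fin_three, h02, h12] at h1
    intro h2
    apply h1
    linear_combination h2
  obtain ⟨h10, h01, h20, h21, e1, e2⟩ := arc_rigid (κ := c * (b ^ 2 * a ^ 2)) (m20 := M 2 0) (m21 := M 2 1) ha hb hdet
    (fun i => ∑ j, algebraMap k (Polynomial k) (M i j) * arc Polynomial.X j)
    (by simp [Fin.sum_univ_three, arc, h02]) (by simp [Fin.sum_univ_three, arc, h12])
    (by simp [Fin.sum_univ_three, arc])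
    (by
      have h1 := equiv_eval h (arc (Polynomial.X : Polynomial k))
      rw [F_arc] at h1
      refine h1.trans ?_
      simp; ring)
  have h1 := equiv_eval h (![1, 0, Polynomial.X] : Fin 3 → Polynomial k)
  rw [F_line _ _ _ (by simp [Fin.sum_univ_three, h10, h12]), F_line _ _ _ (by simp)] at h1
  simp [Fin.sum_univ_three, h02, h20] at h1
  have hm : M 2 2 ≠ 0 := left_ne_zero_of_mul hdet
  have h00 : M 0 0 ≠ 0 := by
    intro h0
    rw [h0, h01] at hdet
    simp at hdet
  generalize M 0 0 = p at *
  generalize M 2 2 = m at *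
  generalize M 1 1 = q at *
  have h2 : Polynomial.C (p ^ 8 * (b ^ 4 - 2 * a ^ 3 * b) - c * (a ^ 4 - 2 * a * b ^ 3))
      + Polynomial.C (p ^ 7 * m * (a ^ 4 - 2 * a * b ^ 3) - c * (b ^ 4 - 2 * a ^ 3 * b))
        * Polynomial.X
      + Polynomial.C (a ^ 2 * b ^ 2 * (p ^ 6 * m ^ 2 - c)) * Polynomial.X ^ 2 = 0 := by
    simp only [Polynomial.C_mul, Polynomial.C_sub, Polynomial.C_pow,
      map_ofNat (Polynomial.C : k →+* Polynomial k) 2]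
    linear_combination -h1
  have k1 := congrArg (fun r => Polynomial.coeff r 1) h2
  have k2 := congrArg (fun r => Polynomial.coeff r 2) h2
  simp only [Polynomial.coeff_add, Polynomial.coeff_C_mul, Polynomial.coeff_X_pow,
    Polynomial.coeff_X, Polynomial.coeff_C, Polynomial.coeff_zero] at k1 k2
  norm_num at k1 k2
  have hc : p ^ 6 * m ^ 2 - c = 0 := by
    rcases k2 with hh | hh
    · exact absurd hh (by tauto)
    · exact hh
  have hc' : (c : k) = p ^ 6 * m ^ 2 := by linear_combination -hc
  rw [hc'] at k1
  have k3 : p * (a ^ 4 - 2 * a * b ^ 3) = m * (b ^ 4 - 2 * a ^ 3 * b) := by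
    apply mul_left_cancel₀ (mul_ne_zero (pow_ne_zero 6 h00) hm)
    linear_combination k1
  have k4 : p ^ 3 = m ^ 3 := by
    apply mul_left_cancel₀ h00
    have : (q * m) ^ 2 = (p ^ 2) ^ 2 := by rw [e1]
    linear_combination -this - m ^ 2 * e2
  apply hab
  apply mul_left_cancel₀ (pow_ne_zero 3 h00)
  rw [← mul_pow, k3, mul_pow, k4]

end NonEquiv

end YC

/-- Theorem 1.5: there exist irreducible, projectively non-equivalent plane curves of
degree 8 with isomorphic complements (a degree-8 counterexample to Yoshihara's
conjecture). -/
theorem exists_degree8_counterexample (k : Type) [Field k] [IsAlgClosed k] :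
    ∃ f g : MvPolynomial (Fin 3) k,
      Irreducible f ∧ Irreducible g ∧
      f.IsHomogeneous 8 ∧ g.IsHomogeneous 8 ∧
      Nonempty (AwayRing k f ≃ₐ[k] AwayRing k g) ∧
      ¬ ProjEquiv f g := by
  classical
  obtain ⟨a, ha, ha6⟩ : ∃ a : k, a ≠ 0 ∧ a ^ 6 - 1 ≠ 0 := by
    have : Infinite k := IsAlgClosed.instInfinite
    let p : Polynomial k := Polynomial.X * (Polynomial.X ^ 6 - Polynomial.C 1)
    have hp : p ≠ 0 := mul_ne_zero Polynomial.X_ne_zero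
      (Polynomial.X_pow_sub_C_ne_zero (by norm_num) 1)
    obtain ⟨a, ha⟩ := Infinite.exists_notMem_finset p.roots.toFinset
    rw [Multiset.mem_toFinset, Polynomial.mem_roots hp, Polynomial.IsRoot] at ha
    simp only [p, Polynomial.eval_mul, Polynomial.eval_X, Polynomial.eval_sub,
      Polynomial.eval_pow, Polynomial.eval_C] at ha
    exact ⟨a, left_ne_zero_of_mul ha, right_ne_zero_of_mul ha⟩
  have h1 : (1 : k) ≠ 0 := one_ne_zero
  refine ⟨YC.F (C a) (C 1) (YC.V3 k), YC.F (C 1) (C a) (YC.V3 k), YC.irreducible_F ha h1,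
    YC.irreducible_F h1 ha, YC.hom_F a 1, YC.hom_F 1 a, YC.away_iso ha h1,
    YC.not_projEquiv ha h1 fun h => ?_⟩
  have h2 : (a ^ 6 - 1) * (a ^ 3 + 1) ^ 2 = 0 := by linear_combination h
  have h3 := (mul_eq_zero.1 h2).resolve_left ha6
  have h4 : a ^ 3 + 1 = 0 := pow_eq_zero_iff (by norm_num) |>.1 h3
  apply ha6
  linear_combination (a ^ 3 - 1) * h4
end

section
/- Let k be an algebraically closed field and let f ∈ k[x₀,x₁,x₂] be an irreducible homogeneous polynomial of total degree d ≥ 1. If the quotient k-algebra k[x₀,x₁]/(f(x₀,x₁,1)) is isomorphic to the polynomial ring k[t] (i.e. the affine curve V(f) ∖ {x₂ = 0} is isomorphic to 𝔸¹), then the line {x₂ = 0} is very tangent to V(f): there exist (a,b) ∈ k² ∖ {(0,0)} and c ∈ kˣ such that f(x₀,x₁,0) = c·(a·x₀ + b·x₁)^d in k[x₀,x₁], i.e. the line meets the curve in exactly one point, with full intersection multiplicity d. -/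
open MvPolynomial

lemma vt_claim1 {k : Type} [Field k] (φ : MvPolynomial (Fin 2) k →ₐ[k] Polynomial k)
    (hφ : Function.Surjective φ) (e : ℕ) :
    ∃ N : ℕ, ∀ r : Polynomial k, r.natDegree < e →
      ∃ h : MvPolynomial (Fin 2) k, h.totalDegree ≤ N ∧ φ h = r := by
  obtain ⟨T, hT⟩ := hφ Polynomial.X
  refine ⟨e * T.totalDegree, fun r hr => ⟨Polynomial.aeval T r, ?_, ?_⟩⟩
  · rw [Polynomial.aeval_eq_sum_range]
    apply totalDegree_finsetSum_le
    intro i hi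
    refine (totalDegree_smul_le _ _).trans ((totalDegree_pow _ _).trans ?_)
    apply Nat.mul_le_mul_right
    simp at hi
    omega
  · rw [← Polynomial.aeval_algHom_apply, hT]
    simp

lemma vt_claim2 {k : Type} [Field k] (φ : MvPolynomial (Fin 2) k →ₐ[k] Polynomial k)
    (e N : ℕ) (he : 1 ≤ e) (L : MvPolynomial (Fin 2) k) (hL : L.totalDegree ≤ 1)
    (hLe : (φ L).natDegree = e)
    (hN : ∀ r : Polynomial k, r.natDegree < e →
      ∃ h : MvPolynomial (Fin 2) k, h.totalDegree ≤ N ∧ φ h = r) (K : ℕ) :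
    ∀ r : Polynomial k, r.natDegree < (K + 1) * e →
      ∃ h : MvPolynomial (Fin 2) k, h.totalDegree ≤ N + K ∧ φ h = r := by
  induction K with
  | zero => simpa using hN
  | succ K ih =>
    intro r hr
    have hmod : (r % φ L).natDegree < e := by
      rw [← hLe]; exact Polynomial.natDegree_mod_lt _ (by omega)
    have hdm := EuclideanDomain.div_add_mod r (φ L)
    have hdiv : (r / φ L).natDegree < (K + 1) * e := by
      by_cases h0 : r / φ L = 0
      · rw [h0]; simp; omega
      · have hL0 : φ L ≠ 0 := by
          intro h; rw [h] at hLe; simp at hLe; omega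
        have h1 : (φ L * (r / φ L)).natDegree = e + (r / φ L).natDegree := by
          rw [Polynomial.natDegree_mul hL0 h0, hLe]
        have h2 : φ L * (r / φ L) = r - r % φ L := eq_sub_of_add_eq hdm
        have h3 : (r - r % φ L).natDegree ≤ max r.natDegree (r % φ L).natDegree :=
          Polynomial.natDegree_sub_le _ _
        rw [← h2, h1] at h3
        have h4 : max r.natDegree (r % φ L).natDegree < (K + 1 + 1) * e := by
          apply max_lt hr
          nlinarith
        nlinarith
    obtain ⟨h1, hh1, hφ1⟩ := ih _ hdiv
    obtain ⟨h2, hh2, hφ2⟩ := hN _ hmod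
    refine ⟨L * h1 + h2, ?_, ?_⟩
    · refine (totalDegree_add _ _).trans (max_le ((totalDegree_mul _ _).trans ?_) ?_) <;> omega
    · rw [map_add, map_mul, hφ1, hφ2, hdm]

/-- substitution `xᵢ ↦ xᵢ s` -/
noncomputable def vtPsi (k : Type) [Field k] :
    MvPolynomial (Fin 2) k →ₐ[k] Polynomial (MvPolynomial (Fin 2) k) :=
  aeval fun i => Polynomial.C (X i) * Polynomial.X

lemma vtPsi_natDegree {k : Type} [Field k] (H : MvPolynomial (Fin 2) k) :
    (vtPsi k H).natDegree ≤ H.totalDegree := by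
  conv_lhs => rw [H.as_sum]
  rw [map_sum]
  apply Polynomial.natDegree_sum_le_of_forall_le
  intro m hm
  have hle := le_totalDegree hm
  rw [Finsupp.sum_fintype _ _ (by simp), Fin.sum_univ_two] at hle
  simp only [vtPsi, aeval_monomial, Finsupp.prod_fintype, pow_zero, implies_true,
    Fin.prod_univ_two]
  rw [IsScalarTower.algebraMap_apply k (MvPolynomial (Fin 2) k) (Polynomial _),
    Polynomial.algebraMap_apply]
  have : ∀ (c u v : MvPolynomial (Fin 2) k) (a b : ℕ), Polynomial.C c *
      ((Polynomial.C u * Polynomial.X) ^ a * (Polynomial.C v * Polynomial.X) ^ b)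
      = Polynomial.C (c * u ^ a * v ^ b) * Polynomial.X ^ (a + b) := by
    intros; simp only [map_mul, map_pow]; ring
  erw [this]
  exact (Polynomial.natDegree_C_mul_X_pow_le _ _).trans hle

lemma vtPsi_g {k : Type} [Field k] (f : MvPolynomial (Fin 3) k) (d : ℕ)
    (hf : f.IsHomogeneous d) :
    (vtPsi k (aeval ![(X 0 : MvPolynomial (Fin 2) k), X 1, 1] f)).natDegree ≤ d ∧
    (vtPsi k (aeval ![(X 0 : MvPolynomial (Fin 2) k), X 1, 1] f)).coeff d =
      aeval ![(X 0 : MvPolynomial (Fin 2) k), X 1, 0] f := by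
  have key : ∀ m ∈ f.support,
      vtPsi k (aeval ![(X 0 : MvPolynomial (Fin 2) k), X 1, 1] (monomial m (coeff m f)))
      = Polynomial.C (C (coeff m f) * X 0 ^ m 0 * X 1 ^ m 1) * Polynomial.X ^ (m 0 + m 1) := by
    intro m hm
    simp only [vtPsi, aeval_monomial, Finsupp.prod_fintype, pow_zero, implies_true,
      Fin.prod_univ_three, map_mul, map_pow]
    simp [IsScalarTower.algebraMap_apply k (MvPolynomial (Fin 2) k) (Polynomial _)]
    ring
  have hdeg : ∀ m ∈ f.support, m 0 + m 1 + m 2 = d := by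
    intro m hm
    have := hf (mem_support_iff.mp hm)
    rw [Finsupp.weight_apply, Finsupp.sum_fintype _ _ (by simp), Fin.sum_univ_three] at this
    simpa using this
  have hs : vtPsi k (aeval ![(X 0 : MvPolynomial (Fin 2) k), X 1, 1] f) =
      ∑ m ∈ f.support, Polynomial.C (C (coeff m f) * X 0 ^ m 0 * X 1 ^ m 1) *
        Polynomial.X ^ (m 0 + m 1) := by
    conv_lhs => rw [f.as_sum]
    rw [map_sum, map_sum]
    exact Finset.sum_congr rfl key
  rw [hs]
  constructor
  · apply Polynomial.natDegree_sum_le_of_forall_le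
    intro m hm
    have := hdeg m hm
    exact (Polynomial.natDegree_C_mul_X_pow_le _ _).trans (by omega)
  · conv_rhs => rw [f.as_sum]
    rw [map_sum, Polynomial.finsetSum_coeff]
    refine Finset.sum_congr rfl fun m hm => ?_
    have := hdeg m hm
    rw [Polynomial.coeff_C_mul_X_pow, aeval_monomial, Finsupp.prod_fintype _ _ (by simp),
      Fin.prod_univ_three]
    by_cases h2 : m 2 = 0
    · rw [if_pos (by omega)]
      simp [h2, algebraMap_eq, mul_assoc]
    · rw [if_neg (by omega)]
      simp [h2]

lemma vt_X_dvd {k : Type} [Field k] (f : MvPolynomial (Fin 3) k)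
    (h : aeval ![(X 0 : MvPolynomial (Fin 2) k), X 1, 0] f = 0) : X 2 ∣ f := by
  rw [← Ideal.mem_span_singleton, ← Ideal.Quotient.eq_zero_iff_mem]
  let π := Ideal.Quotient.mkₐ k (Ideal.span {(X 2 : MvPolynomial (Fin 3) k)})
  let θ : MvPolynomial (Fin 2) k →ₐ[k] _ := aeval ![π (X 0), π (X 1)]
  have h2 : π (X 2) = 0 := by
    apply Ideal.Quotient.eq_zero_iff_mem.mpr
    exact Ideal.mem_span_singleton_self _
  have : π = θ.comp (aeval ![(X 0 : MvPolynomial (Fin 2) k), X 1, 0]) := by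
    apply MvPolynomial.algHom_ext
    intro i
    fin_cases i
    · simp [θ]
    · simp [θ]
    · simpa [θ] using h2
  change π f = 0
  rw [this, AlgHom.comp_apply, h, map_zero]

lemma vt_linear_hom {k : Type} [Field k] (a b : k) :
    (C a * X 0 + C b * X 1 : MvPolynomial (Fin 2) k).IsHomogeneous 1 :=
  ((isHomogeneous_X k (0 : Fin 2)).C_mul a).add ((isHomogeneous_X k (1 : Fin 2)).C_mul b)

lemma vt_linear_ne {k : Type} [Field k] (a b : k) (hab : (a, b) ≠ (0, 0)) :
    (C a * X 0 + C b * X 1 : MvPolynomial (Fin 2) k) ≠ 0 := by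
  intro h
  apply hab
  have h1 := congrArg (aeval ![(1 : k), 0]) h
  have h2 := congrArg (aeval ![(0 : k), 1]) h
  simp at h1 h2
  rw [h1, h2]

lemma vt_linear_prime {k : Type} [Field k] (a b : k) (hab : (a, b) ≠ (0, 0)) :
    Prime (C a * X 0 + C b * X 1 : MvPolynomial (Fin 2) k) := by
  apply Irreducible.prime
  apply irreducible_of_totalDegree_eq_one
  · exact (vt_linear_hom a b).totalDegree (vt_linear_ne a b hab)
  · intro x hx
    rw [isUnit_iff_ne_zero]
    rintro rfl
    apply vt_linear_ne a b hab
    ext i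
    simpa using hx i

theorem very_tangent_of_affine_line (k : Type) [Field k] [IsAlgClosed k]
    (f : MvPolynomial (Fin 3) k) (d : ℕ) (hd : 1 ≤ d)
    (hf : f.IsHomogeneous d) (hfirr : Irreducible f)
    (hA1 : Nonempty ((MvPolynomial (Fin 2) k ⧸
        Ideal.span { aeval ![(X 0 : MvPolynomial (Fin 2) k), X 1, 1] f }) ≃ₐ[k]
        Polynomial k)) :
    ∃ a b : k, (a, b) ≠ (0, 0) ∧ ∃ c : kˣ,
      aeval ![(X 0 : MvPolynomial (Fin 2) k), X 1, 0] f =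
        (c : k) • (C a * X 0 + C b * X 1) ^ d := by
  obtain ⟨E⟩ := hA1
  obtain ⟨hg1, hg2⟩ := vtPsi_g f d hf
  set g := aeval ![(X 0 : MvPolynomial (Fin 2) k), X 1, 1] f with hg
  set F := aeval ![(X 0 : MvPolynomial (Fin 2) k), X 1, 0] f with hF
  let φ : MvPolynomial (Fin 2) k →ₐ[k] Polynomial k :=
    E.toAlgHom.comp (Ideal.Quotient.mkₐ k (Ideal.span {g}))
  have hφs : Function.Surjective φ :=
    E.surjective.comp (Ideal.Quotient.mkₐ_surjective k _)
  have hφk : ∀ h, φ h = 0 → g ∣ h := by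
    intro h hh
    rw [← Ideal.mem_span_singleton, ← Ideal.Quotient.eq_zero_iff_mem]
    have : E (Ideal.Quotient.mk _ h) = 0 := hh
    exact (map_eq_zero_iff E E.injective).mp this
  have hφg : φ g = 0 := by
    have : Ideal.Quotient.mk (Ideal.span {g}) g = 0 :=
      Ideal.Quotient.eq_zero_iff_mem.mpr (Ideal.mem_span_singleton_self _)
    change E (Ideal.Quotient.mk _ g) = 0
    rw [this, map_zero]
  have hgu : ¬ IsUnit g := by
    intro h
    have := h.map φ
    rw [hφg] at this
    exact not_isUnit_zero this
  -- the restriction to the line is nonzero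
  have hF0 : F ≠ 0 := by
    intro h
    obtain ⟨u, hu⟩ := vt_X_dvd f h
    rcases hfirr.isUnit_or_isUnit hu with h1 | h1
    · exact (X_prime (R := k) (i := (2 : Fin 3))).not_isUnit h1
    · apply hgu
      rw [hg, hu, map_mul]
      simpa using h1.map (aeval ![(X 0 : MvPolynomial (Fin 2) k), X 1, 1])
  have hlead : (vtPsi k g).leadingCoeff = F := by
    have : (vtPsi k g).natDegree = d := by
      apply le_antisymm hg1
      apply Polynomial.le_natDegree_of_ne_zero
      rw [hg2]; exact hF0
    rw [Polynomial.leadingCoeff, this, hg2]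
  have hFhom : F.IsHomogeneous d := by
    have := hf.aeval (n := 1) ![(X 0 : MvPolynomial (Fin 2) k), X 1, 0] (by
      intro i
      fin_cases i
      · exact isHomogeneous_X k (0 : Fin 2)
      · exact isHomogeneous_X k (1 : Fin 2)
      · exact isHomogeneous_zero _ _ _)
    rwa [one_mul] at this
  -- degrees of the images of the coordinates
  obtain ⟨i₀, hi₀⟩ : ∃ i₀ : Fin 2, ∀ i, (φ (X i)).natDegree ≤ (φ (X i₀)).natDegree :=
    Finite.exists_max fun i => (φ (X i)).natDegree
  obtain ⟨e, he⟩ : ∃ e, (φ (X i₀)).natDegree = e := ⟨_, rfl⟩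
  rw [he] at hi₀
  have he1 : 1 ≤ e := by
    by_contra hlt
    have hc : ∀ h, φ h ∈ (⊥ : Subalgebra k (Polynomial k)) := by
      intro h
      have h1 : φ = aeval (fun i => φ (X i)) := by
        apply MvPolynomial.algHom_ext
        intro i; simp
      rw [h1]
      induction h using MvPolynomial.induction_on with
      | C a => rw [← algebraMap_eq, AlgHom.commutes]; exact Subalgebra.algebraMap_mem _ a
      | add p q hp hq => rw [map_add]; exact add_mem hp hq
      | mul_X p i hp =>
        rw [map_mul]
        refine mul_mem hp ?_
        rw [aeval_X]
        have := hi₀ i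
        rw [Polynomial.eq_C_of_natDegree_eq_zero (p := φ (X i)) (by omega)]
        exact Subalgebra.algebraMap_mem _ _
    obtain ⟨T, hT⟩ := hφs Polynomial.X
    have := hc T
    rw [hT, Algebra.mem_bot] at this
    obtain ⟨a, ha⟩ := this
    have := congrArg Polynomial.natDegree ha
    simp at this
  obtain ⟨N, hN⟩ := vt_claim1 φ hφs e
  have hK := vt_claim2 φ e N he1 (X i₀) (by simp) he hN
  set a := (φ (X 1)).coeff e with ha
  set b := -(φ (X 0)).coeff e with hb
  have hab : (a, b) ≠ (0, 0) := by
    intro h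
    rw [Prod.mk.injEq] at h
    have h3 : (φ (X i₀)).coeff e = 0 := by
      fin_cases i₀
      · simpa [hb] using h.2
      · exact h.1
    rw [← he] at h3
    have h4 := Polynomial.leadingCoeff_eq_zero.mp h3
    rw [h4] at he
    simp at he
    omega
  refine ⟨a, b, hab, ?_⟩
  have hhom := vt_linear_hom a b
  have hprime := vt_linear_prime a b hab
  have hM : (φ (C a * X 0 + C b * X 1)).natDegree ≤ e - 1 := by
    have h1 : φ (C a * X 0 + C b * X 1) =
        Polynomial.C a * φ (X 0) + Polynomial.C b * φ (X 1) := by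
      rw [map_add, map_mul, map_mul, ← algebraMap_eq, AlgHom.commutes, AlgHom.commutes]
      rfl
    rw [h1, Polynomial.natDegree_le_iff_coeff_eq_zero]
    intro n hn
    rcases Nat.lt_or_ge e n with h | h
    · have h0 := Polynomial.coeff_eq_zero_of_natDegree_lt ((hi₀ 0).trans_lt h)
      have h1 := Polynomial.coeff_eq_zero_of_natDegree_lt ((hi₀ 1).trans_lt h)
      simp [h0, h1]
    · have : n = e := by omega
      subst this
      simp [ha, hb]
      ring
  set M : MvPolynomial (Fin 2) k := C a * X 0 + C b * X 1 with hMdef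
  obtain ⟨e', rfl⟩ : ∃ e', e = e' + 1 := ⟨e - 1, by omega⟩
  set B := (e' + 1) * (N + 1) with hB
  obtain ⟨H, hH, hφH⟩ := hK ((N + 1) * e') (φ (M ^ B)) (by
    rw [map_pow]
    refine (Polynomial.natDegree_pow_le).trans_lt ?_
    have : B * (φ M).natDegree ≤ B * e' := Nat.mul_le_mul_left _ (by omega)
    refine this.trans_lt ?_
    rw [hB]
    nlinarith)
  have hHB : H.totalDegree < B := by
    rw [hB]; nlinarith
  obtain ⟨h, hh⟩ := hφk (M ^ B - H) (by rw [map_sub, hφH, sub_self])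
  have hψM : vtPsi k (M ^ B) = Polynomial.C (M ^ B) * Polynomial.X ^ B := by
    have h1 : vtPsi k M = Polynomial.C M * Polynomial.X := by
      rw [hMdef]
      simp only [vtPsi, map_add, map_mul, aeval_X, aeval_C]
      rw [IsScalarTower.algebraMap_apply k (MvPolynomial (Fin 2) k) (Polynomial _),
        IsScalarTower.algebraMap_apply k (MvPolynomial (Fin 2) k) (Polynomial _),
        Polynomial.algebraMap_apply, Polynomial.algebraMap_apply]
      simp only [algebraMap_eq, Algebra.algebraMap_self, RingHom.id_apply]
      ring
    rw [map_pow, h1, mul_pow, map_pow]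
  have hMB : M ^ B ≠ 0 := pow_ne_zero _ hprime.ne_zero
  have hl2 : (vtPsi k (M ^ B - H)).leadingCoeff = M ^ B := by
    rw [map_sub, hψM, Polynomial.leadingCoeff_sub_of_degree_lt,
      Polynomial.leadingCoeff_C_mul_X_pow]
    rw [Polynomial.degree_C_mul_X_pow _ hMB]
    refine Polynomial.degree_le_natDegree.trans_lt ?_
    exact_mod_cast (vtPsi_natDegree H).trans_lt hHB
  have hdvd : F ∣ M ^ B := by
    rw [← hl2, hh, map_mul, Polynomial.leadingCoeff_mul, hlead]
    exact dvd_mul_right _ _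
  obtain ⟨j, -, hj⟩ := (dvd_prime_pow hprime B).mp hdvd
  obtain ⟨u, hu⟩ := hj.symm
  obtain ⟨c, hc, hcu⟩ := isUnit_iff_eq_C_of_isReduced.mp u.isUnit
  rw [hcu] at hu
  have hjd : j = d := by
    have h1 : F.IsHomogeneous j := by
      rw [← hu, mul_comm]
      have := (hhom.pow j).C_mul c
      simpa using this
    exact h1.inj_right hFhom hF0
  refine ⟨hc.unit, ?_⟩
  rw [← hu, hjd, IsUnit.unit_spec, smul_eq_C_mul, mul_comm]
end
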